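/- arXiv:1310.7339 — 9 statements merged into one kernel-verified Lean document; each statement's English description precedes it below -/
import Mathlib

section
/- Let W⁰·𝒟⁺ denote the union of the sets γ·𝒟⁺ over all γ ∈ W⁰. Then W⁰·𝒟⁺ equals the connected component of 𝒟 (in the subspace topology of Q) that contains 𝒟⁺. -/
/-!
Let a finite group act on a space, and let `D` be an invariant set covered by the translates of a
closed set `C`. Suppose `K = D ∩ C` is connected, and let `W` be generated by the elements whose
translate of `K` meets `K`. Each generator maps some point of `K` into `K`, so it preserves the
component of `D` around `K`. Conversely `W • K` and `Wᶜ • K` cover `D`, are closed in `D`, and are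
disjoint since `w • K ∩ g • K ≠ ∅` forces `w⁻¹ * g ∈ W`. Hence `W • K` is that component.

For permutations of coordinates, `C` is the set of antitone tuples. If `x` and `x ∘ σ` are both
antitone, they are equal, so `σ` permutes each level set of `x`. These level sets are intervals, so
`σ` is a product of adjacent transpositions fixing `x`. In the octant the origin lies on every wall,
but if it belongs to an open `D`, then so does a small nonzero constant tuple.
-/

open Filter Topology Equiv
open scoped Pointwise

section FiniteGroup

variable {G X : Type*} [Group G] [MulAction G X]

/-- The subgroup generated by the elements `g` whose translate `g • K` meets `K`: those that glue
the translates of `K` into one connected piece. -/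
def returnSubgroup (G : Type*) {X : Type*} [Group G] [MulAction G X] (K : Set X) : Subgroup G :=
  Subgroup.closure {g | (g • K ∩ K).Nonempty}

lemma disjoint_returnSubgroup_smul_compl_smul (K : Set X) :
    Disjoint ((returnSubgroup G K : Set G) • K) ((returnSubgroup G K : Set G)ᶜ • K) := by
  rw [Set.disjoint_left]
  rintro _ ⟨w, hw, x, hx, rfl⟩ ⟨g, hg, y, hy, hgy : g • y = w • x⟩
  have hreturn : w⁻¹ * g ∈ returnSubgroup G K :=
    Subgroup.subset_closure ⟨x, ⟨y, hy, by simp [mul_smul, hgy]⟩, hx⟩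
  exact hg ((Subgroup.mul_mem_cancel_left _ (inv_mem hw)).1 hreturn)

lemma smul_inter_eq_inter_smul {D : Set X} (hD : ∀ g : G, g • D = D) (A : Set G) (C : Set X) :
    A • (D ∩ C) = D ∩ A • C := by
  simp only [← Set.iUnion_smul_set, Set.smul_set_inter, hD, Set.inter_iUnion₂]

variable [TopologicalSpace X] [ContinuousConstSMul G X] {C D : Set X} {x : X}

lemma smul_connectedComponentIn (hD : ∀ g : G, g • D = D) (g : G) (hx : x ∈ D) :
    g • connectedComponentIn D x = connectedComponentIn D (g • x) :=
  ((Homeomorph.smul g).image_connectedComponentIn hx).trans <|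
    congrArg (connectedComponentIn · (g • x)) (hD g)

lemma returnSubgroup_le_stabilizer_connectedComponentIn {K : Set X} (hD : ∀ g : G, g • D = D)
    (hKD : K ⊆ D) (hK : IsPreconnected K) (hx : x ∈ K) :
    returnSubgroup G K ≤ MulAction.stabilizer G (connectedComponentIn D x) := by
  have hcomp : ∀ y ∈ K, connectedComponentIn D x = connectedComponentIn D y := fun y hy =>
    connectedComponentIn_eq (hK.subset_connectedComponentIn hx hKD hy)
  refine (Subgroup.closure_le _).2 ?_
  rintro g ⟨_, ⟨y, hy, rfl⟩, hgy⟩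
  calc g • connectedComponentIn D x
      = g • connectedComponentIn D y := by rw [hcomp y hy]
    _ = connectedComponentIn D (g • y) := smul_connectedComponentIn hD g (hKD hy)
    _ = connectedComponentIn D x := (hcomp _ hgy).symm

lemma isClosed_set_smul_of_finite [Finite G] (hC : IsClosed C) (A : Set G) : IsClosed (A • C) := by
  rw [← Set.iUnion_smul_set]
  exact A.toFinite.isClosed_biUnion fun g _ => hC.smul g

lemma returnSubgroup_smul_subset_connectedComponentIn {K : Set X} (hD : ∀ g : G, g • D = D)
    (hKD : K ⊆ D) (hK : IsPreconnected K) (hx : x ∈ K) :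
    (returnSubgroup G K : Set G) • K ⊆ connectedComponentIn D x := by
  rintro _ ⟨w, hw, y, hy, rfl⟩
  have hstab : w • connectedComponentIn D x = connectedComponentIn D x :=
    returnSubgroup_le_stabilizer_connectedComponentIn hD hKD hK hx hw
  rw [← hstab]
  exact Set.smul_mem_smul_set (hK.subset_connectedComponentIn hx hKD hy)

lemma connectedComponentIn_subset_returnSubgroup_smul [Finite G] (hC : IsClosed C)
    (hD : ∀ g : G, g • D = D) (hcover : ∀ y ∈ D, ∃ g : G, g • y ∈ C) (hx : x ∈ D ∩ C) :
    connectedComponentIn D x ⊆ (returnSubgroup G (D ∩ C) : Set G) • (D ∩ C) := by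
  set W := returnSubgroup G (D ∩ C)
  have hcompD : connectedComponentIn D x ⊆ D := connectedComponentIn_subset D x
  have hunion : D ⊆ (W : Set G) • C ∪ (W : Set G)ᶜ • C := by
    intro y hy
    obtain ⟨g, hg⟩ := hcover y hy
    rw [← Set.union_smul, Set.union_compl_self]
    exact ⟨g⁻¹, Set.mem_univ _, g • y, hg, inv_smul_smul g y⟩
  have hdisj : D ∩ ((W : Set G) • C ∩ (W : Set G)ᶜ • C) = ∅ := by
    rw [Set.inter_inter_distrib_left, ← smul_inter_eq_inter_smul hD,
      ← smul_inter_eq_inter_smul hD, ← Set.disjoint_iff_inter_eq_empty]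
    exact disjoint_returnSubgroup_smul_compl_smul _
  have hxW : x ∈ (W : Set G) • C := ⟨1, W.one_mem, x, hx.2, one_smul G x⟩
  rw [smul_inter_eq_inter_smul hD]
  refine Set.subset_inter hcompD ?_
  refine (isPreconnected_iff_subset_of_disjoint_closed.1 isPreconnected_connectedComponentIn _ _
    (isClosed_set_smul_of_finite hC _) (isClosed_set_smul_of_finite hC _) (hcompD.trans hunion)
    (Set.subset_empty_iff.1 (hdisj ▸ Set.inter_subset_inter_left _ hcompD))).resolve_right ?_
  intro hcompl
  exact hdisj.subset ⟨hx.1, hxW, hcompl (mem_connectedComponentIn hx.1)⟩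

theorem returnSubgroup_smul_eq_connectedComponentIn [Finite G] (hC : IsClosed C)
    (hD : ∀ g : G, g • D = D) (hcover : ∀ y ∈ D, ∃ g : G, g • y ∈ C)
    (hconn : IsPreconnected (D ∩ C)) (hx : x ∈ D ∩ C) :
    (returnSubgroup G (D ∩ C) : Set G) • (D ∩ C) = connectedComponentIn D x :=
  (returnSubgroup_smul_subset_connectedComponentIn hD Set.inter_subset_left hconn hx).antisymm
    (connectedComponentIn_subset_returnSubgroup_smul hC hD hcover hx)

end FiniteGroup

section Permutations

variable {n : ℕ} {α : Type*}

/-- The adjacent transpositions whose wall `{x | x k = x l}` meets `K`: the generators of `W⁰`,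
except that the origin counts here as a point of each wall. -/
def wallSwaps (K : Set (Fin n → α)) : Set (Perm (Fin n)) :=
  {σ | ∃ k l, k ⋖ l ∧ σ = swap k l ∧ ∃ x ∈ K, x k = x l}

lemma isSwap_of_mem_wallSwaps {K : Set (Fin n → α)} {σ : Perm (Fin n)} (hσ : σ ∈ wallSwaps K) :
    σ.IsSwap := by
  obtain ⟨k, l, hkl, rfl, -⟩ := hσ
  exact ⟨k, l, hkl.ne, rfl⟩

lemma mem_orbit_closure_wallSwaps [PartialOrder α] {K : Set (Fin n → α)} {x : Fin n → α}
    (hxK : x ∈ K) (hx : Antitone x) {i j : Fin n} (hij : i ≤ j) (hxij : x i = x j) :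
    j ∈ MulAction.orbit (Subgroup.closure (wallSwaps K)) i := by
  have hpath : Relation.ReflTransGen (· ⋖ ·) i j := le_iff_reflTransGen_covBy.1 hij
  induction hpath with
  | refl => exact MulAction.mem_orbit_self i
  | @tail m j him hmj ih =>
    have him : i ≤ m := le_iff_reflTransGen_covBy.2 him
    have hxim : x i = x m := le_antisymm (hxij.trans_le (hx hmj.le)) (hx him)
    have hswap : swap m j ∈ wallSwaps K := ⟨m, j, hmj, rfl, x, hxK, hxim.symm.trans hxij⟩
    rw [← MulAction.orbit_eq_iff.2 (ih him hxim)]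
    exact ⟨⟨swap m j, Subgroup.subset_closure hswap⟩, swap_apply_left m j⟩

lemma mem_closure_wallSwaps_of_comp_eq [PartialOrder α] {K : Set (Fin n → α)} {x : Fin n → α}
    (hxK : x ∈ K) (hx : Antitone x) {σ : Perm (Fin n)} (hσ : x ∘ σ = x) :
    σ ∈ Subgroup.closure (wallSwaps K) := by
  refine (mem_closure_isSwap fun _ => isSwap_of_mem_wallSwaps).2 ⟨Set.toFinite _, fun i => ?_⟩
  have hi : x (σ i) = x i := congrFun hσ i
  rcases le_total i (σ i) with h | h
  · exact mem_orbit_closure_wallSwaps hxK hx h hi.symm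
  · exact MulAction.mem_orbit_symm.1 (mem_orbit_closure_wallSwaps hxK hx h hi)

-- `σ • x = x ∘ σ⁻¹`: the inverse turns precomposition into a left action of `Perm (Fin n)` itself.
attribute [local instance] arrowAction

lemma returnSubgroup_eq_closure_wallSwaps [PartialOrder α] {K : Set (Fin n → α)}
    (hK : ∀ x ∈ K, Antitone x) :
    returnSubgroup (Perm (Fin n)) K = Subgroup.closure (wallSwaps K) := by
  refine le_antisymm ((Subgroup.closure_le _).2 ?_) (Subgroup.closure_mono ?_)
  · rintro σ ⟨_, ⟨x, hx, rfl⟩, hσx : x ∘ ⇑σ⁻¹ ∈ K⟩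
    have hfix : x ∘ ⇑σ⁻¹ = x := Tuple.unique_antitone (τ := 1) (hK _ hσx) (hK x hx)
    exact inv_mem_iff.1 (mem_closure_wallSwaps_of_comp_eq hx (hK x hx) hfix)
  · rintro _ ⟨k, l, -, rfl, x, hx, hkl⟩
    have hfix : x ∘ swap k l = x := by
      rw [comp_swap_eq_update, hkl, Function.update_eq_self, ← hkl, Function.update_eq_self]
    exact ⟨x, ⟨x, hx, hfix⟩, hx⟩

lemma coe_smul_eq_biUnion_image_comp (W : Subgroup (Perm (Fin n))) (K : Set (Fin n → α)) :
    (W : Set (Perm (Fin n))) • K = ⋃ σ ∈ W, (fun x => x ∘ σ) '' K := by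
  rw [← Set.iUnion_smul_set]
  calc ⋃ σ ∈ W, σ • K
      = ⋃ (σ : Perm (Fin n)) (_ : σ⁻¹ ∈ W), σ⁻¹ • K := (inv_surjective.iUnion_comp _).symm
    _ = ⋃ σ ∈ W, σ⁻¹ • K := by simp only [inv_mem_iff]
    _ = ⋃ σ ∈ W, (fun x => x ∘ σ) '' K := rfl

theorem stmt_0_general [LinearOrder α] [TopologicalSpace α] [OrderClosedTopology α]
    {D : Set (Fin n → α)} (hD : ∀ σ : Perm (Fin n), (fun x => x ∘ σ) '' D = D)
    (hconn : IsPreconnected (D ∩ {x | Antitone x})) {x₀ : Fin n → α}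
    (hx₀ : x₀ ∈ D ∩ {x | Antitone x}) :
    (⋃ σ ∈ Subgroup.closure (wallSwaps (D ∩ {x | Antitone x})),
      (fun x => x ∘ σ) '' (D ∩ {x | Antitone x})) = connectedComponentIn D x₀ := by
  have : ContinuousConstSMul (Perm (Fin n)) (Fin n → α) :=
    ⟨fun σ => continuous_pi fun i => continuous_apply (σ⁻¹ i)⟩
  have hsort : ∀ x ∈ D, ∃ σ : Perm (Fin n), σ • x ∈ {x : Fin n → α | Antitone x} := fun x _ =>
    ⟨(Tuple.sort (OrderDual.toDual ∘ x))⁻¹, Tuple.monotone_sort (OrderDual.toDual ∘ x)⟩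
  rw [← coe_smul_eq_biUnion_image_comp, ← returnSubgroup_eq_closure_wallSwaps fun x hx => hx.2]
  exact returnSubgroup_smul_eq_connectedComponentIn isClosed_antitone (fun σ => hD σ⁻¹) hsort
    hconn hx₀

end Permutations

section Octant

variable {ι α : Type*} [Preorder α] [Zero α] [TopologicalSpace α] [(𝓝[>] (0 : α)).NeBot]

lemma exists_pos_const_mem_of_mem_nhdsWithin {D : Set (ι → α)} (hD : D ∈ 𝓝[Set.Ici 0] 0) :
    ∃ c > 0, Function.const ι c ∈ D := by
  have hconst : Tendsto (Function.const ι) (𝓝[>] (0 : α)) (𝓝[Set.Ici 0] 0) :=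
    tendsto_nhdsWithin_iff.2 ⟨Tendsto.mono_left
      ((continuous_pi fun _ => continuous_id).tendsto (0 : α)) nhdsWithin_le_nhds,
      eventually_mem_nhdsWithin.mono fun c hc _ => le_of_lt hc⟩
  obtain ⟨c, hcD, hc⟩ := ((hconst.eventually_mem hD).and eventually_mem_nhdsWithin).exists
  exact ⟨c, hc, hcD⟩

lemma wallSwaps_eq_wallSwaps_diff_zero {n : ℕ} {D : Set (Fin n → α)}
    (hD : (0 : Fin n → α) ∈ D → D ∈ 𝓝[Set.Ici 0] 0) :
    wallSwaps (D ∩ {x | Antitone x}) = wallSwaps ((D ∩ {x | Antitone x}) \ {0}) := by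
  refine Set.Subset.antisymm ?_ ?_
  · rintro _ ⟨k, l, hkl, rfl, x, hx, hxkl⟩
    by_cases hx0 : x = 0
    · obtain ⟨c, hc, hcD⟩ := exists_pos_const_mem_of_mem_nhdsWithin (hD (hx0 ▸ hx.1))
      exact ⟨k, l, hkl, rfl, Function.const _ c, ⟨⟨hcD, antitone_const⟩,
        fun h => hc.ne' (congrFun h k)⟩, rfl⟩
    · exact ⟨k, l, hkl, rfl, x, ⟨hx, hx0⟩, hxkl⟩
  · rintro _ ⟨k, l, hkl, rfl, x, hx, hxkl⟩
    exact ⟨k, l, hkl, rfl, x, hx.1, hxkl⟩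

end Octant

/-- Let `W⁰·𝒟⁺` denote the union of the sets `γ·𝒟⁺` over all `γ ∈ W⁰`.
Then `W⁰·𝒟⁺` equals the connected component of `𝒟` (in the subspace topology of `Q`)
containing `𝒟⁺`. -/
theorem stmt_0 {r : ℕ} (hr : 1 ≤ r)
    (Q : Set (Fin r → ℝ)) (hQ : Q = {x | ∀ i, 0 ≤ x i})
    (Cplus : Set (Fin r → ℝ))
    (hC : Cplus = {x | (∀ i j : Fin r, i ≤ j → x j ≤ x i) ∧ ∀ i, 0 ≤ x i})
    (D : Set (Fin r → ℝ))
    (hDQ : D ⊆ Q) (hDne : D.Nonempty)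
    (hDinv : ∀ σ : Equiv.Perm (Fin r), (fun x => x ∘ σ) '' D = D)
    (hDopen : ∃ U : Set (Fin r → ℝ), IsOpen U ∧ D = U ∩ Q)
    (Dplus : Set (Fin r → ℝ)) (hDplus : Dplus = D ∩ Cplus)
    (hconn : IsConnected Dplus)
    (Γ0 : Set (Equiv.Perm (Fin r)))
    (hΓ0 : Γ0 = {σ | ∃ k l : Fin r, (k : ℕ) + 1 = (l : ℕ) ∧
        σ = Equiv.swap k l ∧ ∃ x ∈ Dplus, x ≠ 0 ∧ x k = x l})
    (W0 : Subgroup (Equiv.Perm (Fin r))) (hW0 : W0 = Subgroup.closure Γ0)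
    (x₀ : Fin r → ℝ) (hx₀ : x₀ ∈ Dplus) :
    (⋃ σ ∈ W0, (fun x => x ∘ σ) '' Dplus) = connectedComponentIn D x₀ := by
  have hchamber : Dplus = D ∩ {x | Antitone x} := by
    rw [hDplus, hC]
    ext x
    exact ⟨fun hx => ⟨hx.1, hx.2.1⟩, fun hx => ⟨hx.1, hx.2, (hQ ▸ hDQ) hx.1⟩⟩
  have hnhds : (0 : Fin r → ℝ) ∈ D → D ∈ 𝓝[Set.Ici 0] 0 := by
    obtain ⟨U, hU, rfl⟩ := hDopen
    exact fun h0 => mem_nhdsWithin.2 ⟨U, hU, h0.1, by rw [hQ]; rfl⟩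
  have hwalls : Γ0 = wallSwaps (D ∩ {x | Antitone x}) := by
    rw [wallSwaps_eq_wallSwaps_diff_zero hnhds, hΓ0, hchamber]
    simp [wallSwaps, Nat.covBy_iff_add_one_eq, and_assoc]
  rw [hW0, hwalls, hchamber]
  exact stmt_0_general hDinv (hchamber ▸ hconn.isPreconnected) (hchamber ▸ hx₀)
end

section
/- Let W⁰·Ω⁺ denote the union of the sets γ·Ω⁺ over all γ ∈ W⁰. Then W⁰·Ω⁺ equals the connected component of Ω that contains Ω⁺. -/
/-!
Two independent facts combine. Let a finite group `G` act on a space, let `A` be closed and `Ω` open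
and `G`-invariant with `Ω ∩ A` connected, and let `W` be generated by the stabilizers of the points
of `Ω ∩ A`. Each of these stabilizers preserves the connected component `C ⊇ Ω ∩ A` of `Ω`, so
`W • (Ω ∩ A) ⊆ C`. Conversely, `Ω ∩ W • A = W • (Ω ∩ A)` is closed in `Ω`; if moreover every point
close to `x ∈ Ω ∩ A` can be moved into `A` by the stabilizer of `x`, it is open, hence contains `C`.

When permutations act on coordinates and `A` is the set of antitone vectors, sorting a vector close
to `x` only permutes coordinates on which `x` is constant, and the stabilizer of an antitone `x` is
generated by the adjacent transpositions it contains.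
-/

open Set Topology MulAction
open scoped Pointwise

section GroupAction

variable {G X : Type*} [Group G] [MulAction G X] [TopologicalSpace X] [ContinuousConstSMul G X]
  {A Ω : Set X} {x₀ : X}

theorem stabilizer_le_stabilizer_connectedComponentIn {x : X} (hΩ : ∀ g : G, g • Ω = Ω)
    (hx : x ∈ Ω) : stabilizer G x ≤ stabilizer G (connectedComponentIn Ω x) := by
  intro g hg
  calc g • connectedComponentIn Ω x
      = connectedComponentIn (g • Ω) (g • x) := (Homeomorph.smul g).image_connectedComponentIn hx
    _ = connectedComponentIn Ω x := by rw [hΩ, mem_stabilizer_iff.mp hg]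

theorem iSup_stabilizer_smul_subset_connectedComponentIn {S : Set X} (hΩ : ∀ g : G, g • Ω = Ω)
    (hS : S ⊆ connectedComponentIn Ω x₀) :
    ((⨆ x ∈ S, stabilizer G x : Subgroup G) : Set G) • S ⊆ connectedComponentIn Ω x₀ := by
  have stabilizes : ⨆ x ∈ S, stabilizer G x ≤ stabilizer G (connectedComponentIn Ω x₀) := by
    refine iSup₂_le fun x hx ↦ ?_
    rw [connectedComponentIn_eq (hS hx)]
    exact stabilizer_le_stabilizer_connectedComponentIn hΩ (connectedComponentIn_subset _ _ (hS hx))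
  rintro _ ⟨g, hg, x, hx, rfl⟩
  rw [← mem_stabilizer_iff.mp (stabilizes hg)]
  exact smul_mem_smul_set (hS hx)

theorem isOpen_inter_subgroup_smul {W : Subgroup G} (hΩ : IsOpen Ω) (hWΩ : ∀ g ∈ W, g • Ω = Ω)
    (hW : ∀ x ∈ Ω ∩ A, ∀ᶠ y in 𝓝 x, ∃ g ∈ W, g • y ∈ A) : IsOpen (Ω ∩ (W : Set G) • A) := by
  refine isOpen_iff_mem_nhds.mpr ?_
  rintro _ ⟨hgaΩ, g, hg, a, ha, rfl⟩
  have haΩ : a ∈ Ω := by rwa [← smul_mem_smul_set_iff (a := g), hWΩ g hg]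
  have near : ∀ᶠ z in 𝓝 (g • a), ∃ h ∈ W, h • g⁻¹ • z ∈ A :=
    (continuous_const_smul g⁻¹).tendsto' _ _ (inv_smul_smul g a) |>.eventually (hW a ⟨haΩ, ha⟩)
  filter_upwards [near, hΩ.mem_nhds hgaΩ] with z ⟨h, hh, hz⟩ hzΩ
  refine ⟨hzΩ, (h * g⁻¹)⁻¹, W.inv_mem (W.mul_mem hh (W.inv_mem hg)), _, hz, ?_⟩
  simp only [smul_smul, inv_mul_cancel, one_smul]

theorem connectedComponentIn_subset_subgroup_smul {W : Subgroup G} [Finite W] (hA : IsClosed A)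
    (hΩ : IsOpen Ω) (hWΩ : ∀ g ∈ W, g • Ω = Ω)
    (hW : ∀ x ∈ Ω ∩ A, ∀ᶠ y in 𝓝 x, ∃ g ∈ W, g • y ∈ A) (hx₀ : x₀ ∈ Ω ∩ A) :
    connectedComponentIn Ω x₀ ⊆ (W : Set G) • (Ω ∩ A) := by
  have smul_closed : IsClosed ((W : Set G) • A) := by
    rw [← iUnion_smul_set]
    exact (toFinite (W : Set G)).isClosed_biUnion fun g _ ↦ hA.smul g
  have subset_inter : connectedComponentIn Ω x₀ ⊆ Ω ∩ (W : Set G) • A := by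
    refine isPreconnected_connectedComponentIn.subset_left_of_subset_union
      (isOpen_inter_subgroup_smul hΩ hWΩ hW) smul_closed.isOpen_compl
      (disjoint_compl_right.mono_left inter_subset_right) (fun y hy ↦ ?_)
      ⟨x₀, mem_connectedComponentIn hx₀.1, hx₀.1, 1, W.one_mem, x₀, hx₀.2, one_smul G x₀⟩
    by_cases hyA : y ∈ (W : Set G) • A
    · exact .inl ⟨connectedComponentIn_subset _ _ hy, hyA⟩
    · exact .inr hyA
  intro y hy
  obtain ⟨hyΩ, g, hg, a, ha, rfl⟩ := subset_inter hy
  exact smul_mem_smul hg ⟨by rwa [← smul_mem_smul_set_iff (a := g), hWΩ g hg], ha⟩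

theorem iSup_stabilizer_smul_eq_connectedComponentIn [Finite G] (hA : IsClosed A) (hΩ : IsOpen Ω)
    (hinv : ∀ g : G, g • Ω = Ω) (hconn : IsPreconnected (Ω ∩ A))
    (hloc : ∀ x ∈ Ω ∩ A, ∀ᶠ y in 𝓝 x, ∃ g ∈ stabilizer G x, g • y ∈ A) (hx₀ : x₀ ∈ Ω ∩ A) :
    ((⨆ x ∈ Ω ∩ A, stabilizer G x : Subgroup G) : Set G) • (Ω ∩ A) =
      connectedComponentIn Ω x₀ := by
  refine (iSup_stabilizer_smul_subset_connectedComponentIn hinv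
    (hconn.subset_connectedComponentIn hx₀ inter_subset_left)).antisymm
    (connectedComponentIn_subset_subgroup_smul hA hΩ (fun g _ ↦ hinv g) (fun x hx ↦ ?_) hx₀)
  filter_upwards [hloc x hx] with y ⟨g, hg, hgy⟩
  exact ⟨g, le_iSup₂ (f := fun x _ ↦ stabilizer G x) x hx hg, hgy⟩

end GroupAction

theorem exists_ne_const_mem_of_isOpen {ι α : Type*} [TopologicalSpace α] {a : α}
    [(𝓝[≠] a).NeBot] {Ω : Set (ι → α)} (hΩ : IsOpen Ω) (ha : Function.const ι a ∈ Ω) :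
    ∃ c ≠ a, Function.const ι c ∈ Ω := by
  have near : ∀ᶠ c in 𝓝[≠] a, Function.const ι c ∈ Ω :=
    nhdsWithin_le_nhds <| (hΩ.preimage (continuous_pi fun _ ↦ continuous_id)).mem_nhds ha
  exact (eventually_mem_nhdsWithin.and near).exists

section Permutations

open Equiv

/-- The transpositions of two consecutive indices at which `x` takes the same value, i.e. the simple
reflections fixing `x`. -/
def adjacentSwaps {ι α : Type*} [LinearOrder ι] (x : ι → α) : Set (Perm ι) :=
  {σ | ∃ k l, k ⋖ l ∧ σ = swap k l ∧ x k = x l}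

theorem swap_mem_closure_adjacentSwaps {ι α : Type*} [LinearOrder ι] [LocallyFiniteOrder ι]
    [PartialOrder α] {x : ι → α} (hx : Antitone x) {i j : ι} (hij : x i = x j) :
    swap i j ∈ Subgroup.closure (adjacentSwaps x) := by
  wlog hle : i ≤ j generalizing i j
  · exact swap_comm i j ▸ this hij.symm (le_of_not_ge hle)
  induction le_iff_reflTransGen_covBy.mp hle using Relation.ReflTransGen.head_induction_on with
  | refl => exact swap_self j ▸ one_mem _
  | @head i k hik hkj ih =>
    have hkj : k ≤ j := le_iff_reflTransGen_covBy.mpr hkj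
    have hxik : x i = x k := (hij.trans_le (hx hkj)).antisymm (hx hik.le)
    exact SubmonoidClass.swap_mem_trans _ (Subgroup.subset_closure ⟨i, k, hik, rfl, hxik⟩)
      (ih (hxik ▸ hij) hkj)

-- A permutation `σ` acts on `ι → α` by `σ • x = x ∘ σ⁻¹`.
attribute [local instance] arrowAction

theorem mem_stabilizer_perm_iff_comp_eq {ι α : Type*} {x : ι → α} {σ : Perm ι} :
    σ ∈ stabilizer (Perm ι) x ↔ x ∘ σ = x :=
  inv_mem_iff.symm

theorem stabilizer_perm_eq_closure_adjacentSwaps {ι α : Type*} [LinearOrder ι]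
    [LocallyFiniteOrder ι] [Finite ι] [PartialOrder α] {x : ι → α} (hx : Antitone x) :
    stabilizer (Perm ι) x = Subgroup.closure (adjacentSwaps x) := by
  refine le_antisymm (fun σ hσ ↦ ?_) ((Subgroup.closure_le _).mpr ?_)
  · have isSwap : ∀ τ ∈ adjacentSwaps x, τ.IsSwap := by
      rintro _ ⟨k, l, hkl, rfl, -⟩
      exact ⟨k, l, hkl.ne, rfl⟩
    refine (mem_closure_isSwap isSwap).mpr ⟨toFinite _, fun i ↦ ?_⟩
    have hσi : x (σ i) = x i := congrFun (mem_stabilizer_perm_iff_comp_eq.mp hσ) i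
    exact (swap_mem_closure_isSwap isSwap).mp (swap_mem_closure_adjacentSwaps hx hσi)
  · rintro _ ⟨k, l, -, rfl, hkl⟩
    refine mem_stabilizer_perm_iff_comp_eq.mpr ?_
    rw [comp_swap_eq_update, hkl, Function.update_eq_self, ← hkl, Function.update_eq_self]

theorem eventually_exists_mem_stabilizer_smul_antitone {n : ℕ} {α : Type*} [LinearOrder α]
    [TopologicalSpace α] [OrderClosedTopology α] {x : Fin n → α} (hx : Antitone x) :
    ∀ᶠ y in 𝓝 x, ∃ σ ∈ stabilizer (Perm (Fin n)) x, Antitone (σ • y) := by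
  have lt_near : ∀ᶠ y in 𝓝 x, ∀ i j, x i < x j → y i < y j := by
    simp only [Filter.eventually_all]
    exact fun i j hij ↦
      (isOpen_lt (continuous_apply i) (continuous_apply j)).mem_nhds hij
  filter_upwards [lt_near] with y hy
  let σ := Tuple.sort (OrderDual.toDual ∘ y)
  have sorted : Antitone (y ∘ σ) := Tuple.monotone_sort (OrderDual.toDual ∘ y)
  have sorted_x : Antitone (x ∘ σ) := fun i j hij ↦
    not_lt.mp fun hlt ↦ (hy _ _ hlt).not_ge (sorted hij)
  have fixes : x ∘ σ = x := Tuple.unique_antitone (τ := 1) sorted_x hx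
  exact ⟨σ⁻¹, inv_mem (mem_stabilizer_perm_iff_comp_eq.mpr fixes), sorted⟩

theorem biUnion_image_comp_perm_eq_smul {ι α : Type*} (W : Subgroup (Perm ι)) (S : Set (ι → α)) :
    ⋃ σ ∈ W, (fun x ↦ x ∘ σ) '' S = (W : Set (Perm ι)) • S := by
  rw [← inv_coe_set, ← iUnion_smul_set]
  exact (Equiv.inv (Perm ι)).iSup_congr fun σ ↦ by
    simp only [Equiv.inv_apply, Set.mem_inv, inv_inv]; rfl

theorem iSup_stabilizer_eq_closure_swap {n : ℕ} {α : Type*} [PartialOrder α] [Zero α]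
    [TopologicalSpace α] [(𝓝[≠] (0 : α)).NeBot] {Ω : Set (Fin n → α)} (hΩ : IsOpen Ω) :
    ⨆ x ∈ Ω ∩ {x | Antitone x}, stabilizer (Perm (Fin n)) x =
      Subgroup.closure {σ | ∃ k l : Fin n, (k : ℕ) + 1 = (l : ℕ) ∧ σ = swap k l ∧
        ∃ x ∈ Ω ∩ {x | Antitone x}, x ≠ 0 ∧ x k = x l} := by
  calc ⨆ x ∈ Ω ∩ {x | Antitone x}, stabilizer (Perm (Fin n)) x
      = ⨆ x ∈ Ω ∩ {x | Antitone x}, Subgroup.closure (adjacentSwaps x) :=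
        biSup_congr fun x hx ↦ stabilizer_perm_eq_closure_adjacentSwaps hx.2
    _ = Subgroup.closure (⋃ x ∈ Ω ∩ {x | Antitone x}, adjacentSwaps x) := by
        simp only [Subgroup.closure_iUnion]
    _ = _ := ?_
  congr 1
  ext σ
  simp only [adjacentSwaps, mem_iUnion₂, exists_prop, Fin.covBy_iff, Nat.covBy_iff_add_one_eq]
  constructor
  · rintro ⟨x, hx, k, l, hkl, rfl, hxkl⟩
    refine ⟨k, l, hkl, rfl, ?_⟩
    obtain rfl | hx0 := eq_or_ne x 0
    · obtain ⟨c, hc0, hcΩ⟩ := exists_ne_const_mem_of_isOpen (a := (0 : α)) hΩ hx.1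
      exact ⟨Function.const _ c, ⟨hcΩ, antitone_const⟩, fun h ↦ hc0 (congrFun h k), rfl⟩
    · exact ⟨x, hx, hx0, hxkl⟩
  · rintro ⟨k, l, hkl, rfl, x, hx, -, hxkl⟩
    exact ⟨x, hx, k, l, hkl, rfl, hxkl⟩

theorem stmt_2_general {r : ℕ} {α : Type*} [LinearOrder α] [Zero α] [TopologicalSpace α]
    [OrderClosedTopology α] [(𝓝[≠] (0 : α)).NeBot] {Ω : Set (Fin r → α)} (hopen : IsOpen Ω)
    (hinv : ∀ σ : Perm (Fin r), (fun x ↦ x ∘ σ) '' Ω = Ω)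
    (hconn : IsPreconnected (Ω ∩ {x | Antitone x})) {x₀ : Fin r → α}
    (hx₀ : x₀ ∈ Ω ∩ {x | Antitone x}) :
    ⋃ σ ∈ Subgroup.closure {σ | ∃ k l : Fin r, (k : ℕ) + 1 = (l : ℕ) ∧ σ = swap k l ∧
        ∃ x ∈ Ω ∩ {x | Antitone x}, x ≠ 0 ∧ x k = x l},
      (fun x ↦ x ∘ σ) '' (Ω ∩ {x | Antitone x}) = connectedComponentIn Ω x₀ := by
  have : ContinuousConstSMul (Perm (Fin r)) (Fin r → α) :=
    ⟨fun σ ↦ continuous_pi fun i ↦ continuous_apply (σ⁻¹ i)⟩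
  rw [biUnion_image_comp_perm_eq_smul, ← iSup_stabilizer_eq_closure_swap hopen]
  exact iSup_stabilizer_smul_eq_connectedComponentIn isClosed_antitone hopen
    (fun σ ↦ hinv σ⁻¹) hconn
    (fun x hx ↦ eventually_exists_mem_stabilizer_smul_antitone hx.2) hx₀

end Permutations

/-- `W⁰·Ω⁺` (the union of the sets `γ·Ω⁺` over `γ ∈ W⁰`) equals the
connected component of `Ω` containing `Ω⁺`. -/
theorem stmt_2 {r : ℕ} (hr : 1 ≤ r)
    (Aplus : Set (Fin r → ℝ))
    (hA : Aplus = {x | ∀ i j : Fin r, i ≤ j → x j ≤ x i})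
    (Ω : Set (Fin r → ℝ))
    (hne : Ω.Nonempty) (hopen : IsOpen Ω)
    (hinv : ∀ σ : Equiv.Perm (Fin r), (fun x => x ∘ σ) '' Ω = Ω)
    (Ωplus : Set (Fin r → ℝ)) (hΩplus : Ωplus = Ω ∩ Aplus)
    (hconn : IsConnected Ωplus)
    (Γ0 : Set (Equiv.Perm (Fin r)))
    (hΓ0 : Γ0 = {σ | ∃ k l : Fin r, (k : ℕ) + 1 = (l : ℕ) ∧
        σ = Equiv.swap k l ∧ ∃ x ∈ Ωplus, x ≠ 0 ∧ x k = x l})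
    (W0 : Subgroup (Equiv.Perm (Fin r))) (hW0 : W0 = Subgroup.closure Γ0)
    (x₀ : Fin r → ℝ) (hx₀ : x₀ ∈ Ωplus) :
    (⋃ σ ∈ W0, (fun x => x ∘ σ) '' Ωplus) = connectedComponentIn Ω x₀ := by
  subst hA hΩplus hΓ0 hW0
  exact stmt_2_general hopen hinv hconn.isPreconnected hx₀
end

section
/- Every nonempty convex subset C of the octant Q that is invariant under all coordinate permutations and open in the subspace topology of Q intersects at least one of the two sets [0,1)^r = {x ∈ Q : x_i < 1 for all i} and (1,∞)^r = {x ∈ Q : x_i > 1 for all i}. -/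
/-!
Averaging a point of `C` over a finite group that permutes the coordinates transitively gives a
fixed point of the group in `C`, and such a fixed point is a constant vector. If its common value
is less than the threshold, we are done. Otherwise `C`, being relatively open in an upper set, also
contains a constant vector of slightly larger value, whose coordinates all exceed the threshold.
-/

open MulAction Topology

theorem inter_fixedPoints_nonempty_of_convex {𝕜 E G : Type*}
    [Field 𝕜] [LinearOrder 𝕜] [IsStrictOrderedRing 𝕜] [AddCommGroup E] [Module 𝕜 E]
    [Group G] [Finite G] [DistribMulAction G E] [SMulCommClass G 𝕜 E]
    {C : Set E} (hconv : Convex 𝕜 C) (hne : C.Nonempty) (hinv : ∀ g : G, ∀ x ∈ C, g • x ∈ C) :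
    (C ∩ fixedPoints G E).Nonempty := by
  have := Fintype.ofFinite G
  obtain ⟨x, hx⟩ := hne
  refine ⟨∑ g : G, (Fintype.card G : 𝕜)⁻¹ • g • x, ?_, fun h => ?_⟩
  · exact hconv.sum_mem (fun _ _ => by positivity) (by simp) fun g _ => hinv g x hx
  · calc h • ∑ g : G, (Fintype.card G : 𝕜)⁻¹ • g • x
        = ∑ g : G, (Fintype.card G : 𝕜)⁻¹ • (h * g) • x := by
          simp only [Finset.smul_sum, smul_comm h, mul_smul]
      _ = ∑ g : G, (Fintype.card G : 𝕜)⁻¹ • g • x :=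
          Equiv.sum_comp (Equiv.mulLeft h) fun g => (Fintype.card G : 𝕜)⁻¹ • g • x

theorem apply_eq_apply_of_mem_fixedPoints {G ι α : Type*} [Monoid G] [MulAction G ι]
    [IsPretransitive G ι] {f : ι → α} (hf : f ∈ fixedPoints Gᵈᵐᵃ (ι → α)) (i j : ι) :
    f i = f j := by
  obtain ⟨g, rfl⟩ := exists_smul_eq G i j
  exact (congrFun (hf (DomMulAct.mk g)) i).symm

theorem exists_const_mem_of_convex {𝕜 G ι : Type*}
    [Field 𝕜] [LinearOrder 𝕜] [IsStrictOrderedRing 𝕜]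
    [Group G] [Finite G] [MulAction G ι] [IsPretransitive G ι]
    {C : Set (ι → 𝕜)} (hconv : Convex 𝕜 C) (hne : C.Nonempty)
    (hinv : ∀ g : G, ∀ x ∈ C, (fun i => x (g • i)) ∈ C) :
    ∃ c : 𝕜, Function.const ι c ∈ C := by
  have : Finite Gᵈᵐᵃ := .of_equiv G DomMulAct.mk
  obtain ⟨f, hfC, hf⟩ := inter_fixedPoints_nonempty_of_convex (G := Gᵈᵐᵃ) hconv hne
    fun g => hinv (DomMulAct.mk.symm g)
  obtain ⟨c, hc⟩ : ∃ c, ∀ i, f i = c :=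
    (isEmpty_or_nonempty ι).elim (fun _ => ⟨0, isEmptyElim⟩)
      fun ⟨j⟩ => ⟨f j, fun i => apply_eq_apply_of_mem_fixedPoints hf i j⟩
  exact ⟨c, (funext hc : f = Function.const ι c) ▸ hfC⟩

theorem exists_gt_const_mem_inter_of_isOpen {ι α : Type*} [LinearOrder α] [TopologicalSpace α]
    [OrderTopology α] [DenselyOrdered α] [NoMaxOrder α] {U Q : Set (ι → α)} (hU : IsOpen U)
    (hQ : IsUpperSet Q) {c : α} (hc : Function.const ι c ∈ U ∩ Q) :
    ∃ d > c, Function.const ι d ∈ U ∩ Q := by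
  have hcont : Continuous (Function.const ι : α → ι → α) := continuous_pi fun _ => continuous_id
  have hnear : ∀ᶠ d in 𝓝[>] c, Function.const ι d ∈ U :=
    mem_nhdsWithin_of_mem_nhds ((hU.preimage hcont).mem_nhds hc.1)
  obtain ⟨d, hdU, hcd⟩ := (hnear.and self_mem_nhdsWithin).exists
  exact ⟨d, hcd, hdU, hQ (fun _ => hcd.le) hc.2⟩

theorem stmt_4_general {𝕜 G ι : Type*}
    [Field 𝕜] [LinearOrder 𝕜] [IsStrictOrderedRing 𝕜] [TopologicalSpace 𝕜] [OrderTopology 𝕜]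
    [Group G] [Finite G] [MulAction G ι] [IsPretransitive G ι]
    {Q C : Set (ι → 𝕜)} (hQ : IsUpperSet Q) (hne : C.Nonempty) (hconv : Convex 𝕜 C)
    (hinv : ∀ g : G, ∀ x ∈ C, (fun i => x (g • i)) ∈ C)
    (hopen : ∃ U : Set (ι → 𝕜), IsOpen U ∧ C = U ∩ Q) (a : 𝕜) :
    (∃ x ∈ C, ∀ i, x i < a) ∨ (∃ x ∈ C, ∀ i, a < x i) := by
  obtain ⟨c, hc⟩ := exists_const_mem_of_convex hconv hne hinv
  rcases lt_or_ge c a with hca | hac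
  · exact .inl ⟨_, hc, fun _ => hca⟩
  · obtain ⟨U, hU, rfl⟩ := hopen
    obtain ⟨d, hcd, hd⟩ := exists_gt_const_mem_inter_of_isOpen hU hQ hc
    exact .inr ⟨_, hd, fun _ => hac.trans_lt hcd⟩

/-- Every nonempty convex subset `C` of the octant `Q` that is invariant
under all coordinate permutations and open in the subspace topology of `Q` intersects at
least one of `[0,1)^r = {x ∈ Q : ∀ i, x i < 1}` and `(1,∞)^r = {x ∈ Q : ∀ i, 1 < x i}`. -/
theorem stmt_4 {r : ℕ} (hr : 1 ≤ r)
    (Q : Set (Fin r → ℝ)) (hQ : Q = {x | ∀ i, 0 ≤ x i})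
    (C : Set (Fin r → ℝ))
    (hCQ : C ⊆ Q) (hne : C.Nonempty) (hconv : Convex ℝ C)
    (hinv : ∀ σ : Equiv.Perm (Fin r), (fun x => x ∘ σ) '' C = C)
    (hopen : ∃ U : Set (Fin r → ℝ), IsOpen U ∧ C = U ∩ Q) :
    (∃ x ∈ C, ∀ i, x i < 1) ∨ (∃ x ∈ C, ∀ i, 1 < x i) :=
  stmt_4_general (G := Equiv.Perm (Fin r))
    (hQ ▸ fun _ _ hxy hx i => (hx i).trans (hxy i)) hne hconv
    (fun σ _ hx => hinv σ ▸ Set.mem_image_of_mem _ hx) hopen 1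
end

section
/- Let C be a nonempty convex subset of the octant Q, invariant under all coordinate permutations and open in the subspace topology of Q, and suppose C contains a point z with max_i z_i ≥ 1 and min_i z_i ≤ 1 (i.e., z lies neither in [0,1)^r nor in (1,∞)^r). Then C contains a point x having exactly one coordinate equal to 1 and such that either all the other coordinates of x are < 1, or all the other coordinates of x are > 1. -/
/-!
Averaging `z` over all permutations puts the constant vector with the same mean `m` into `C`. If
`m < 1`, pick `i` with `1 ≤ z i`; the segment from that constant vector to `z` contains a point with
`i`-th coordinate `1` and mean `m`, and averaging it over the permutations fixing `i` makes its
other coordinates equal, hence `< 1` because the mean is. The case `1 < m` is symmetric. If `m = 1`,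
the constant vector `1` lies in `C`, and openness allows increasing all but one of its coordinates.
-/

open Function MulAction
open scoped BigOperators Topology

theorem expect_mem_of_convex {𝕜 E κ : Type*} [Field 𝕜] [LinearOrder 𝕜] [IsStrictOrderedRing 𝕜]
    [AddCommGroup E] [Module 𝕜 E] [Module ℚ≥0 E] [IsScalarTower ℚ≥0 𝕜 E] {C : Set E}
    (hC : Convex 𝕜 C) {s : Finset κ} (hs : s.Nonempty) {f : κ → E} (hf : ∀ k ∈ s, f k ∈ C) :
    𝔼 k ∈ s, f k ∈ C := by
  have hcard : (s.card : 𝕜) ≠ 0 := Nat.cast_ne_zero.2 hs.card_ne_zero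
  have expect_eq : 𝔼 k ∈ s, f k = ∑ k ∈ s, (s.card : 𝕜)⁻¹ • f k := by
    rw [Finset.expect, ← Finset.smul_sum, ← smul_one_smul 𝕜, NNRat.smul_def, mul_one,
      NNRat.cast_inv, NNRat.cast_natCast]
  rw [expect_eq]
  exact hC.sum_mem (fun _ _ ↦ by positivity) (by simp [hcard]) hf

/-- The average of a family `x : ι → M` over the action of a finite group `G` on its index type.
It projects the families onto the `G`-invariant ones; its value at `j` is the mean of `x` over the
orbit of `j`. -/
def orbitAverage (G : Type*) {ι M : Type*} [Group G] [Fintype G] [MulAction G ι] [AddCommMonoid M]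
    [Module ℚ≥0 M] (x : ι → M) (j : ι) : M :=
  𝔼 g : G, x (g • j)

namespace orbitAverage

section Module

variable {G ι M : Type*} [Group G] [Fintype G] [MulAction G ι] [AddCommMonoid M] [Module ℚ≥0 M]

theorem apply_smul (x : ι → M) (g : G) (j : ι) :
    orbitAverage G x (g • j) = orbitAverage G x j :=
  Fintype.expect_equiv (Equiv.mulRight g) _ _ fun h ↦ by rw [Equiv.coe_mulRight, mul_smul]

theorem apply_of_mem_fixedPoints (x : ι → M) {i : ι} (hi : i ∈ fixedPoints G ι) :
    orbitAverage G x i = x i := by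
  simp only [orbitAverage, mem_fixedPoints.1 hi, Fintype.expect_const]

theorem expect_eq [Fintype ι] (x : ι → M) : 𝔼 j, orbitAverage G x j = 𝔼 j, x j := by
  have expect_smul (g : G) : 𝔼 j, x (g • j) = 𝔼 j, x j :=
    Fintype.expect_equiv (toPerm g) _ _ fun _ ↦ rfl
  simp only [orbitAverage, Finset.expect_comm, expect_smul, Fintype.expect_const]

end Module

theorem mem_of_convex {𝕜 G ι M : Type*} [Field 𝕜] [LinearOrder 𝕜] [IsStrictOrderedRing 𝕜] [Group G]
    [Fintype G] [MulAction G ι] [AddCommGroup M] [Module 𝕜 M] [Module ℚ≥0 M]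
    [IsScalarTower ℚ≥0 𝕜 M] {C : Set (ι → M)} (hC : Convex 𝕜 C) {x : ι → M}
    (hx : ∀ g : G, (fun j ↦ x (g • j)) ∈ C) : orbitAverage G x ∈ C := by
  have orbitAverage_eq : orbitAverage G x = 𝔼 g : G, fun j ↦ x (g • j) := by
    ext j
    simp only [orbitAverage, Finset.expect, Pi.smul_apply, Finset.sum_apply]
  exact orbitAverage_eq ▸ expect_mem_of_convex hC Finset.univ_nonempty fun g _ ↦ hx g

end orbitAverage

section Field

variable {ι 𝕜 : Type*} [Fintype ι] [Field 𝕜] [LinearOrder 𝕜] [IsStrictOrderedRing 𝕜]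
  {C : Set (ι → 𝕜)} {x : ι → 𝕜} {i : ι} {a : 𝕜}

theorem const_expect_mem_of_convex (hC : Convex 𝕜 C) (hx : ∀ σ : Equiv.Perm ι, x ∘ σ ∈ C) :
    const ι (𝔼 j, x j) ∈ C := by
  classical
  have apply_eq (j k : ι) : orbitAverage (Equiv.Perm ι) x j = orbitAverage (Equiv.Perm ι) x k := by
    simpa using orbitAverage.apply_smul x (Equiv.swap j k) k
  convert orbitAverage.mem_of_convex (G := Equiv.Perm ι) hC hx
  ext j
  have : Nonempty ι := ⟨j⟩
  rw [const_apply, ← orbitAverage.expect_eq (G := Equiv.Perm ι)]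
  simp only [apply_eq _ j, Fintype.expect_const]

theorem exists_mem_apply_eq_of_mem_uIcc_expect (hC : Convex 𝕜 C) (hx : x ∈ C)
    (hmean : const ι (𝔼 j, x j) ∈ C) (ha : a ∈ Set.uIcc (𝔼 j, x j) (x i)) :
    ∃ y ∈ C, y i = a ∧ 𝔼 j, y j = 𝔼 j, x j := by
  have : Nonempty ι := ⟨i⟩
  rw [← segment_eq_uIcc] at ha
  obtain ⟨s, t, hs, ht, hst, rfl⟩ := ha
  refine ⟨_, hC hmean hx hs ht hst, rfl, ?_⟩
  simp only [Pi.add_apply, Pi.smul_apply, const_apply, Finset.expect_add_distrib,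
    ← Finset.smul_expect, Fintype.expect_const, ← add_smul, hst, one_smul]

theorem exists_mem_eq_off_of_stabilizer (hC : Convex 𝕜 C)
    (hx : ∀ σ : Equiv.Perm ι, σ i = i → x ∘ σ ∈ C) :
    ∃ y ∈ C, y i = x i ∧ 𝔼 j, y j = 𝔼 j, x j ∧ ∀ j ≠ i, ∀ k ≠ i, y j = y k := by
  classical
  refine ⟨orbitAverage (stabilizer (Equiv.Perm ι) i) x,
    orbitAverage.mem_of_convex hC fun σ ↦ hx σ σ.2,
    orbitAverage.apply_of_mem_fixedPoints x fun σ ↦ σ.2, orbitAverage.expect_eq x,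
    fun j hj k hk ↦ ?_⟩
  let τ : stabilizer (Equiv.Perm ι) i :=
    ⟨Equiv.swap j k, Equiv.swap_apply_of_ne_of_ne hj.symm hk.symm⟩
  have hτ : τ • k = j := Equiv.swap_apply_right j k
  rw [← hτ, orbitAverage.apply_smul]

theorem exists_mem_eq_off_of_mem_uIcc_expect (hC : Convex 𝕜 C)
    (hperm : ∀ σ : Equiv.Perm ι, ∀ x ∈ C, x ∘ σ ∈ C) (hx : x ∈ C)
    (ha : a ∈ Set.uIcc (𝔼 j, x j) (x i)) :
    ∃ y ∈ C, y i = a ∧ 𝔼 j, y j = 𝔼 j, x j ∧ ∀ j ≠ i, ∀ k ≠ i, y j = y k := by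
  have hmean := const_expect_mem_of_convex hC fun σ ↦ hperm σ x hx
  obtain ⟨y, hy, rfl, hyx⟩ := exists_mem_apply_eq_of_mem_uIcc_expect hC hx hmean ha
  rw [← hyx]
  exact exists_mem_eq_off_of_stabilizer hC fun σ _ ↦ hperm σ y hy

theorem exists_mem_apply_eq_forall_ne_lt (hC : Convex 𝕜 C)
    (hperm : ∀ σ : Equiv.Perm ι, ∀ x ∈ C, x ∘ σ ∈ C) (hx : x ∈ C)
    (hmean : 𝔼 j, x j < a) (ha : a ≤ x i) :
    ∃ y ∈ C, y i = a ∧ ∀ j ≠ i, y j < a := by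
  obtain ⟨y, hy, hyi, hyx, hyeq⟩ := exists_mem_eq_off_of_mem_uIcc_expect hC hperm hx
    (Set.mem_uIcc_of_le hmean.le ha)
  rw [← hyx] at hmean
  obtain ⟨k, -, hk⟩ := Finset.exists_lt_of_expect_lt ⟨i, Finset.mem_univ i⟩ hmean
  have hki : k ≠ i := by
    rintro rfl
    exact hk.ne hyi
  exact ⟨y, hy, hyi, fun j hj ↦ (hyeq j hj k hki).trans_lt hk⟩

theorem exists_mem_apply_eq_forall_ne_gt (hC : Convex 𝕜 C)
    (hperm : ∀ σ : Equiv.Perm ι, ∀ x ∈ C, x ∘ σ ∈ C) (hx : x ∈ C)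
    (hmean : a < 𝔼 j, x j) (ha : x i ≤ a) :
    ∃ y ∈ C, y i = a ∧ ∀ j ≠ i, a < y j := by
  obtain ⟨y, hy, hyi, hyx, hyeq⟩ := exists_mem_eq_off_of_mem_uIcc_expect hC hperm hx
    (Set.mem_uIcc_of_ge ha hmean.le)
  rw [← hyx] at hmean
  obtain ⟨k, -, hk⟩ := Finset.exists_lt_of_lt_expect ⟨i, Finset.mem_univ i⟩ hmean
  have hki : k ≠ i := by
    rintro rfl
    exact hk.ne' hyi
  exact ⟨y, hy, hyi, fun j hj ↦ hk.trans_eq (hyeq k hki j hj)⟩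

end Field

section Topology

variable {𝕜 : Type*} [Field 𝕜] [LinearOrder 𝕜] [IsStrictOrderedRing 𝕜] [TopologicalSpace 𝕜]
  [OrderTopology 𝕜]

theorem exists_pos_add_smul_mem_inter {E : Type*} [AddCommGroup E] [PartialOrder E]
    [IsOrderedAddMonoid E] [Module 𝕜 E] [PosSMulMono 𝕜 E] [TopologicalSpace E] [ContinuousAdd E]
    [ContinuousSMul 𝕜 E] {U Q : Set E} (hU : IsOpen U) (hQ : IsUpperSet Q) {x v : E}
    (hx : x ∈ U ∩ Q) (hv : 0 ≤ v) : ∃ ε : 𝕜, 0 < ε ∧ x + ε • v ∈ U ∩ Q := by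
  have hcont : Continuous fun ε : 𝕜 ↦ x + ε • v := by fun_prop
  have hnhds : ∀ᶠ ε : 𝕜 in 𝓝[>] 0, x + ε • v ∈ U :=
    nhdsWithin_le_nhds (hcont.continuousAt.eventually_mem (hU.mem_nhds (by simpa using hx.1)))
  obtain ⟨ε, hεU, hε : 0 < ε⟩ := (hnhds.and self_mem_nhdsWithin).exists
  exact ⟨ε, hε, hεU, hQ (le_add_of_nonneg_right (smul_nonneg hε.le hv)) hx.2⟩

theorem exists_mem_inter_apply_eq_forall_ne_gt {ι : Type*} {U Q : Set (ι → 𝕜)} (hU : IsOpen U)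
    (hQ : IsUpperSet Q) {x : ι → 𝕜} (hx : x ∈ U ∩ Q) (i : ι) :
    ∃ y ∈ U ∩ Q, y i = x i ∧ ∀ j ≠ i, x j < y j := by
  classical
  obtain ⟨ε, hε, hmem⟩ := exists_pos_add_smul_mem_inter (𝕜 := 𝕜) hU hQ hx
    (show 0 ≤ update (1 : ι → 𝕜) i 0 from le_update_iff.2 ⟨le_rfl, fun _ _ ↦ zero_le_one⟩)
  refine ⟨_, hmem, by simp, fun j hj ↦ ?_⟩
  simpa [update_of_ne hj] using hε

theorem stmt_5_general {ι : Type*} [Finite ι] {Q C : Set (ι → 𝕜)} (hQ : IsUpperSet Q)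
    (hconv : Convex 𝕜 C) (hperm : ∀ σ : Equiv.Perm ι, ∀ x ∈ C, x ∘ σ ∈ C)
    (hopen : ∃ U : Set (ι → 𝕜), IsOpen U ∧ C = U ∩ Q) {z : ι → 𝕜} (hz : z ∈ C) {a : 𝕜}
    (hz_ge : ∃ i, a ≤ z i) (hz_le : ∃ i, z i ≤ a) :
    ∃ x ∈ C, ∃ i, x i = a ∧ ((∀ j ≠ i, x j < a) ∨ ∀ j ≠ i, a < x j) := by
  cases nonempty_fintype ι
  obtain ⟨i, hi⟩ := hz_ge
  obtain ⟨k, hk⟩ := hz_le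
  rcases lt_trichotomy (𝔼 j, z j) a with hlt | rfl | hgt
  · obtain ⟨x, hx, hxi, hxlt⟩ := exists_mem_apply_eq_forall_ne_lt hconv hperm hz hlt hi
    exact ⟨x, hx, i, hxi, .inl hxlt⟩
  · have hmean := const_expect_mem_of_convex hconv fun σ ↦ hperm σ z hz
    obtain ⟨U, hU, rfl⟩ := hopen
    obtain ⟨x, hx, hxi, hxgt⟩ := exists_mem_inter_apply_eq_forall_ne_gt hU hQ hmean i
    exact ⟨x, hx, i, hxi, .inr hxgt⟩
  · obtain ⟨x, hx, hxk, hxgt⟩ := exists_mem_apply_eq_forall_ne_gt hconv hperm hz hgt hk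
    exact ⟨x, hx, k, hxk, .inr hxgt⟩

end Topology

/-- Let `C` be a nonempty convex subset of the octant `Q`, invariant under
all coordinate permutations and open in the subspace topology of `Q`, containing a point
`z` with `max_i z_i ≥ 1` and `min_i z_i ≤ 1`. Then `C` contains a point `x` having exactly
one coordinate equal to `1`, with all other coordinates `< 1` or all other
coordinates `> 1`. -/
theorem stmt_5 {r : ℕ} (hr : 1 ≤ r)
    (Q : Set (Fin r → ℝ)) (hQ : Q = {x | ∀ i, 0 ≤ x i})
    (C : Set (Fin r → ℝ))
    (hCQ : C ⊆ Q) (hne : C.Nonempty) (hconv : Convex ℝ C)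
    (hinv : ∀ σ : Equiv.Perm (Fin r), (fun x => x ∘ σ) '' C = C)
    (hopen : ∃ U : Set (Fin r → ℝ), IsOpen U ∧ C = U ∩ Q)
    (z : Fin r → ℝ) (hz : z ∈ C)
    (hz1 : ∃ i, 1 ≤ z i) (hz2 : ∃ i, z i ≤ 1) :
    ∃ x ∈ C, ∃ i : Fin r, x i = 1 ∧ (∀ j, x j = 1 → j = i) ∧
      ((∀ j, j ≠ i → x j < 1) ∨ (∀ j, j ≠ i → 1 < x j)) := by
  obtain ⟨x, hx, i, hxi, h⟩ := stmt_5_general (hQ ▸ isUpperSet_Ici (0 : Fin r → ℝ)) hconv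
    (fun σ x hx ↦ hinv σ ▸ ⟨x, hx, rfl⟩) hopen hz hz1 hz2
  refine ⟨x, hx, i, hxi, fun j hxj ↦ by_contra fun hj ↦ ?_, h⟩
  exact h.elim (fun hlt ↦ (hlt j hj).ne hxj) fun hgt ↦ (hgt j hj).ne' hxj
end

section
/- The union, over all x ∈ Ω, of the sets {Y(x) + t·M : t ∈ convexHull(Σ_{Y(x)})} equals the convex hull of Ω ∪ γ(Ω). -/
/-!
Let `s x = x - f x • v`. A point of the convex hull of `Ω ∪ s '' Ω` has the form
`p = a • x + b • s y` with `x`, `y` in `Ω`. Since `f` does not change sign on `Ω`, the point `p`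
lies on the segment from `w = a • x + b • y` to `s w`, which is parallel to `v`. So the hull is
already the union of the segments `[w, s w]` with `w ∈ Ω`, and each of them lies in the hull of a
single fibre of `Ω ∪ s '' Ω` in the direction `v`.
-/

open Module Set

theorem mul_pos_of_ordConnected_of_zero_notMem {R : Type*} [Ring R] [LinearOrder R]
    [IsStrictOrderedRing R] {S : Set R} (hS : S.OrdConnected) (h0 : 0 ∉ S) {a b : R}
    (ha : a ∈ S) (hb : b ∈ S) : 0 < a * b := by
  by_contra! hab
  rcases mul_nonpos_iff.mp hab with ⟨ha0, hb0⟩ | ⟨ha0, hb0⟩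
  · exact h0 (hS.out hb ha ⟨hb0, ha0⟩)
  · exact h0 (hS.out ha hb ⟨ha0, hb0⟩)

theorem comp_swap_eq_preReflection {ι R : Type*} [DecidableEq ι] [CommRing R] (i j : ι)
    (x : ι → R) :
    x ∘ Equiv.swap i j =
      preReflection (Pi.single i 1 - Pi.single j 1 : ι → R)
        (LinearMap.proj (R := R) (φ := fun _ ↦ R) i - LinearMap.proj j) x := by
  ext k
  by_cases hi : k = i <;> by_cases hj : k = j <;>
    simp_all [preReflection_apply, Equiv.swap_apply_of_ne_of_ne]

theorem image_add_smul_convexHull_preimage {R E : Type*} [Ring R] [PartialOrder R]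
    [AddCommGroup E] [Module R E] (y v : E) (S : Set E) :
    (fun t : R ↦ y + t • v) '' convexHull R {t | y + t • v ∈ S} =
      convexHull R (S ∩ range fun t : R ↦ y + t • v) := by
  have coe_lineMap : ⇑(AffineMap.lineMap y (y + v) : R →ᵃ[R] E) = fun t ↦ y + t • v := by
    ext t
    simp [AffineMap.lineMap_apply, add_comm]
  rw [← image_preimage_eq_inter_range, ← coe_lineMap, ← AffineMap.image_convexHull, coe_lineMap]
  rfl

section Field

variable {𝕜 E : Type*} [Field 𝕜] [LinearOrder 𝕜] [IsStrictOrderedRing 𝕜] [AddCommGroup E]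
  [Module 𝕜 E] {Ω : Set E} {f : Dual 𝕜 E}

theorem mem_segment_zero_add_of_mul_nonneg {c d : 𝕜} (h : 0 ≤ c * d) :
    c ∈ segment 𝕜 0 (c + d) := by
  rw [segment_eq_uIcc, mem_uIcc]
  rcases mul_nonneg_iff.mp h with ⟨hc, hd⟩ | ⟨hc, hd⟩
  · exact .inl ⟨hc, by linarith⟩
  · exact .inr ⟨by linarith, hc⟩

theorem smul_add_smul_preReflection_mem_segment {x y : E} (hxy : 0 ≤ f x * f y) (v : E) {a b : 𝕜}
    (ha : 0 ≤ a) (hb : 0 ≤ b) :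
    a • x + b • preReflection v f y ∈
      segment 𝕜 (a • x + b • y) (preReflection v f (a • x + b • y)) := by
  set w := a • x + b • y with hw
  have hfw : f w = b * f y + a * f x := by simp [hw, add_comm]
  have hmem : b * f y ∈ segment 𝕜 0 (f w) := by
    rw [hfw]
    apply mem_segment_zero_add_of_mul_nonneg
    calc 0 ≤ a * b * (f x * f y) := by positivity
      _ = b * f y * (a * f x) := by ring
  obtain ⟨c, d, hc, hd, hcd, hsum⟩ := hmem
  refine ⟨c, d, hc, hd, hcd, ?_⟩
  calc c • w + d • preReflection v f w
      = (c + d) • w - (c • 0 + d • f w) • v := by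
        rw [preReflection_apply, smul_eq_mul, smul_eq_mul]
        module
    _ = w - (b * f y) • v := by rw [hcd, one_smul, hsum]
    _ = a • x + b • preReflection v f y := by
        rw [hw, preReflection_apply]
        module

theorem convexHull_union_preReflection_image (hΩ : Convex 𝕜 Ω)
    (hf : ∀ x ∈ Ω, ∀ y ∈ Ω, 0 ≤ f x * f y) (v : E) :
    convexHull 𝕜 (Ω ∪ preReflection v f '' Ω) = ⋃ x ∈ Ω, segment 𝕜 x (preReflection v f x) := by
  rcases Ω.eq_empty_or_nonempty with rfl | hne
  · simp
  apply Subset.antisymm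
  · rw [convexHull_union hne (hne.image _), hΩ.convexHull_eq, (hΩ.linear_image _).convexHull_eq]
    intro p hp
    obtain ⟨x, hx, _, ⟨y, hy, rfl⟩, a, b, ha, hb, hab, rfl⟩ := mem_convexJoin.mp hp
    exact mem_biUnion (hΩ hx hy ha hb hab)
      (smul_add_smul_preReflection_mem_segment (hf x hx y hy) v ha hb)
  · exact iUnion₂_subset fun x hx ↦ segment_subset_convexHull (.inl hx) (.inr ⟨x, hx, rfl⟩)

theorem apply_mul_apply_pos_of_convex (hΩ : Convex 𝕜 Ω) (hf : ∀ x ∈ Ω, f x ≠ 0) {x y : E}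
    (hx : x ∈ Ω) (hy : y ∈ Ω) : 0 < f x * f y :=
  mul_pos_of_ordConnected_of_zero_notMem (hΩ.linear_image f).ordConnected
    (fun ⟨z, hz, hz0⟩ ↦ hf z hz hz0) (mem_image_of_mem f hx) (mem_image_of_mem f hy)

/-- The base point `x - z x • v` of the fibre through `x` may be chosen arbitrarily on the line
`x + 𝕜 v`; taking `z = f / 2` when `f v = 2` gives the projection onto the fixed hyperplane of the
reflection. -/
theorem stmt_8_general (hΩ : Convex 𝕜 Ω) (hf : ∀ x ∈ Ω, ∀ y ∈ Ω, 0 ≤ f x * f y) (v : E)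
    (z : E → 𝕜) :
    (⋃ x ∈ Ω, (fun t ↦ x - z x • v + t • v) ''
      convexHull 𝕜 {t : 𝕜 | x - z x • v + t • v ∈ Ω ∪ preReflection v f '' Ω}) =
      convexHull 𝕜 (Ω ∪ preReflection v f '' Ω) := by
  simp only [image_add_smul_convexHull_preimage]
  apply Subset.antisymm
  · exact iUnion₂_subset fun x _ ↦ convexHull_mono inter_subset_left
  · rw [convexHull_union_preReflection_image hΩ hf]
    refine iUnion₂_mono fun x hx ↦ segment_subset_convexHull ⟨.inl hx, z x, ?_⟩
      ⟨.inr ⟨x, hx, rfl⟩, z x - f x, ?_⟩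
    · module
    · simp only [preReflection_apply]
      module

end Field

/-- With `γ` the swap of the first two coordinates of `ℝ^r`,
`F = Fix(γ)`, `M = e₁ − e₂`, `x = Y(x) + Z(x)·M` the decomposition along `F ⊕ ℝM`,
`Ω ⊆ ℝ^r` nonempty convex with `Ω ∩ F = ∅`, and `Σ_Y = {t : Y + t·M ∈ Ω ∪ γ(Ω)}`:
the union over `x ∈ Ω` of the sets `{Y(x) + t·M : t ∈ convexHull (Σ_{Y(x)})}` equals the
convex hull of `Ω ∪ γ(Ω)`. -/
theorem stmt_8 {r : ℕ} (hr : 2 ≤ r)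
    (i0 i1 : Fin r) (hi0 : (i0 : ℕ) = 0) (hi1 : (i1 : ℕ) = 1)
    (γ : (Fin r → ℝ) → (Fin r → ℝ)) (hγ : γ = fun x => x ∘ Equiv.swap i0 i1)
    (M : Fin r → ℝ) (hM : M = fun i => if i = i0 then 1 else if i = i1 then -1 else 0)
    (Z : (Fin r → ℝ) → ℝ) (hZ : Z = fun x => (x i0 - x i1) / 2)
    (Y : (Fin r → ℝ) → (Fin r → ℝ)) (hY : Y = fun x => x - Z x • M)
    (Ω : Set (Fin r → ℝ)) (hne : Ω.Nonempty) (hconv : Convex ℝ Ω)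
    (hdisj : Ω ∩ {x | x i0 = x i1} = ∅)
    (Sig : (Fin r → ℝ) → Set ℝ)
    (hSig : Sig = fun Y₀ => {t : ℝ | Y₀ + t • M ∈ Ω ∪ γ '' Ω}) :
    (⋃ x ∈ Ω, (fun t => Y x + t • M) '' convexHull ℝ (Sig (Y x)))
      = convexHull ℝ (Ω ∪ γ '' Ω) := by
  have h01 : i0 ≠ i1 := by
    rintro rfl
    omega
  have hM_single : M = Pi.single i0 1 - Pi.single i1 1 := by
    ext k
    simp only [hM, Pi.sub_apply, Pi.single_apply]
    grind
  let f : Dual ℝ (Fin r → ℝ) :=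
    LinearMap.proj (R := ℝ) (φ := fun _ ↦ ℝ) i0 - LinearMap.proj i1
  have hγ_reflection : γ = preReflection M f := by
    rw [hγ, hM_single]
    exact funext (comp_swap_eq_preReflection i0 i1)
  have hf : ∀ x ∈ Ω, f x ≠ 0 := fun x hx h0 ↦ hdisj.subset ⟨hx, sub_eq_zero.mp h0⟩
  rw [hSig, hY, hγ_reflection]
  exact stmt_8_general hconv (fun _ hx _ hy ↦ (apply_mul_apply_pos_of_convex hconv hf hx hy).le) M Z
end

section
/- Two points v, v' ∈ ℂ² lie in the same orbit of the group 𝒢 of transformations of ℂ² generated by the rotations R_t (t ∈ ℝ) and the real translations τ_u (u ∈ ℝ²) if and only if ‖Im v‖ = ‖Im v'‖. Consequently, every 𝒢-orbit in ℂ² contains exactly one point of the form (i·s, 0) with s ≥ 0. -/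
/-- The complex rotation `R_t` of `ℂ²`. -/
noncomputable def rotC (l : ℂ) (v : ℂ × ℂ) : ℂ × ℂ :=
  (v.1 * Complex.cos l - v.2 * Complex.sin l, v.1 * Complex.sin l + v.2 * Complex.cos l)

lemma rotC_rotC (t s : ℂ) (v : ℂ × ℂ) : rotC t (rotC s v) = rotC (t + s) v := by
  simp only [rotC, Complex.cos_add, Complex.sin_add, Prod.mk.injEq]
  constructor <;> ring

lemma rotC_zero (v : ℂ × ℂ) : rotC 0 v = v := by
  simp [rotC]

/-- The rotation `R_t` (`t ∈ ℝ`) as a bijective transformation of `ℂ²`. -/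
noncomputable def rotCEquiv (t : ℝ) : Equiv.Perm (ℂ × ℂ) where
  toFun := rotC (t : ℂ)
  invFun := rotC (-(t : ℂ))
  left_inv v := by rw [rotC_rotC, neg_add_cancel, rotC_zero]
  right_inv v := by rw [rotC_rotC, add_neg_cancel, rotC_zero]

/-- The real translation `τ_u` (`u ∈ ℝ² ⊆ ℂ²`) as a bijective transformation of `ℂ²`. -/
noncomputable def transEquiv (u : ℝ × ℝ) : Equiv.Perm (ℂ × ℂ) :=
  Equiv.addLeft (((u.1 : ℂ), (u.2 : ℂ)) : ℂ × ℂ)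

/-- The group `𝒢` of transformations of `ℂ²` generated by the rotations `R_t` (`t ∈ ℝ`)
and the real translations `τ_u` (`u ∈ ℝ²`). -/
noncomputable def G : Subgroup (Equiv.Perm (ℂ × ℂ)) :=
  Subgroup.closure (Set.range rotCEquiv ∪ Set.range transEquiv)

/-- The Euclidean norm on `ℝ²`. -/
noncomputable def enorm2 (x : ℝ × ℝ) : ℝ := Real.sqrt (x.1 ^ 2 + x.2 ^ 2)

/-! Identify the imaginary part of `(z, w) ∈ ℂ²` with the complex number `c = Im z + i Im w`. A
real translation does not change `c`, and `R_t` multiplies it by `exp (i t)`, so `‖c‖` is invariant.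
Conversely, if `‖c‖ = ‖d‖`, some `R_t` turns `c` into `d`, and two points with the same imaginary
part differ by a real translation. -/

lemma apply_smul_eq_of_mem_closure {M α β : Type*} [Group M] [MulAction M α] {S : Set M}
    {f : α → β} (hS : ∀ g ∈ S, ∀ x, f (g • x) = f x) {g : M} (hg : g ∈ Subgroup.closure S)
    (x : α) : f (g • x) = f x := by
  induction hg using Subgroup.closure_induction generalizing x with
  | mem g hg => exact hS g hg x
  | one => rw [one_smul]
  | mul g h _ _ ihg ihh => rw [mul_smul, ihg, ihh]
  | inv g _ ih => rw [← ih, smul_inv_smul]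

lemma exists_exp_mul_I_mul_eq_of_norm_eq {c d : ℂ} (h : ‖c‖ = ‖d‖) :
    ∃ t : ℝ, Complex.exp (t * Complex.I) * c = d := by
  refine ⟨d.arg - c.arg, ?_⟩
  calc Complex.exp ((d.arg - c.arg : ℝ) * Complex.I) * c
      = Complex.exp ((d.arg - c.arg : ℝ) * Complex.I) *
          (‖c‖ * Complex.exp (c.arg * Complex.I)) := by rw [Complex.norm_mul_exp_arg_mul_I]
    _ = ‖d‖ * Complex.exp (d.arg * Complex.I) := by
        rw [mul_left_comm, ← Complex.exp_add, ← add_mul, ← Complex.ofReal_add, sub_add_cancel, h]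
    _ = d := Complex.norm_mul_exp_arg_mul_I d

/-- The imaginary part `(Im z, Im w) ∈ ℝ²` of `(z, w) ∈ ℂ²`, encoded as the complex number
`Im z + i Im w`, so that rotations of `ℝ²` become multiplications by complex phases. -/
def imComplex (v : ℂ × ℂ) : ℂ := ⟨v.1.im, v.2.im⟩

lemma enorm2_im_eq_norm_imComplex (v : ℂ × ℂ) : enorm2 (v.1.im, v.2.im) = ‖imComplex v‖ :=
  (Complex.norm_eq_sqrt_sq_add_sq (imComplex v)).symm

lemma imComplex_rotCEquiv (t : ℝ) (v : ℂ × ℂ) :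
    imComplex (rotCEquiv t v) = Complex.exp (t * Complex.I) * imComplex v := by
  apply Complex.ext <;>
    simp only [imComplex, rotCEquiv, rotC, Equiv.coe_fn_mk, ← Complex.ofReal_cos,
      ← Complex.ofReal_sin, Complex.add_im, Complex.sub_im, Complex.mul_re, Complex.mul_im,
      Complex.ofReal_re, Complex.ofReal_im, Complex.exp_ofReal_mul_I_re,
      Complex.exp_ofReal_mul_I_im] <;>
    ring

lemma imComplex_transEquiv (u : ℝ × ℝ) (v : ℂ × ℂ) :
    imComplex (transEquiv u v) = imComplex v := by
  simp [imComplex, transEquiv]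

lemma exists_transEquiv_eq_of_imComplex_eq {v w : ℂ × ℂ} (h : imComplex v = imComplex w) :
    ∃ u, transEquiv u v = w := by
  obtain ⟨him₁, him₂⟩ : v.1.im = w.1.im ∧ v.2.im = w.2.im := Complex.ext_iff.1 h
  refine ⟨(w.1.re - v.1.re, w.2.re - v.2.re), ?_⟩
  refine Prod.ext (Complex.ext ?_ ?_) (Complex.ext ?_ ?_) <;> simp [transEquiv, him₁, him₂]

lemma rotCEquiv_mem_G (t : ℝ) : rotCEquiv t ∈ G :=
  Subgroup.subset_closure (.inl ⟨t, rfl⟩)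

lemma transEquiv_mem_G (u : ℝ × ℝ) : transEquiv u ∈ G :=
  Subgroup.subset_closure (.inr ⟨u, rfl⟩)

lemma norm_imComplex_apply_of_mem_G {g : Equiv.Perm (ℂ × ℂ)} (hg : g ∈ G) (v : ℂ × ℂ) :
    ‖imComplex (g v)‖ = ‖imComplex v‖ := by
  refine apply_smul_eq_of_mem_closure (f := (‖imComplex ·‖)) ?_ hg v
  rintro _ (⟨t, rfl⟩ | ⟨u, rfl⟩) x
  · simp only [Equiv.Perm.smul_def, imComplex_rotCEquiv, norm_mul,
      Complex.norm_exp_ofReal_mul_I, one_mul]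
  · simp only [Equiv.Perm.smul_def, imComplex_transEquiv]

lemma exists_mem_G_apply_eq_iff (v w : ℂ × ℂ) :
    (∃ g ∈ G, g v = w) ↔ ‖imComplex v‖ = ‖imComplex w‖ := by
  constructor
  · rintro ⟨g, hg, rfl⟩
    exact (norm_imComplex_apply_of_mem_G hg v).symm
  · intro h
    obtain ⟨t, ht⟩ := exists_exp_mul_I_mul_eq_of_norm_eq h
    obtain ⟨u, hu⟩ := exists_transEquiv_eq_of_imComplex_eq ((imComplex_rotCEquiv t v).trans ht)
    exact ⟨transEquiv u * rotCEquiv t, G.mul_mem (transEquiv_mem_G u) (rotCEquiv_mem_G t), hu⟩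

lemma imComplex_I_mul_ofReal_zero (s : ℝ) : imComplex (Complex.I * s, 0) = s := by
  apply Complex.ext <;> simp [imComplex]

/-- Two points `v, v' ∈ ℂ²` lie in the same `𝒢`-orbit if and only if
`‖Im v‖ = ‖Im v'‖`; consequently every `𝒢`-orbit contains exactly one point of the form
`(i·s, 0)` with `s ≥ 0`. -/
theorem stmt_14 :
    (∀ v v' : ℂ × ℂ,
      (∃ g ∈ G, g v = v') ↔ enorm2 (v.1.im, v.2.im) = enorm2 (v'.1.im, v'.2.im)) ∧
    (∀ v : ℂ × ℂ, ∃! p : ℂ × ℂ,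
      (∃ s : ℝ, 0 ≤ s ∧ p = (Complex.I * s, 0)) ∧ ∃ g ∈ G, g v = p) := by
  simp only [enorm2_im_eq_norm_imComplex]
  refine ⟨exists_mem_G_apply_eq_iff, fun v ↦ ?_⟩
  have norm_normalForm {s : ℝ} (hs : 0 ≤ s) : ‖imComplex (Complex.I * s, 0)‖ = s := by
    rw [imComplex_I_mul_ofReal_zero, Complex.norm_of_nonneg hs]
  refine ⟨(Complex.I * ‖imComplex v‖, 0), ⟨⟨‖imComplex v‖, norm_nonneg _, rfl⟩, ?_⟩, ?_⟩
  · exact (exists_mem_G_apply_eq_iff _ _).2 (norm_normalForm (norm_nonneg _)).symm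
  · rintro _ ⟨⟨s, hs, rfl⟩, hv⟩
    rw [(exists_mem_G_apply_eq_iff _ _).1 hv, norm_normalForm hs]
end

section
/- The set 𝒮 of all matrices in M_{2r}(ℝ) of the block form with U in positions (1,1) and (3,3), I_{r−2} in positions (2,2) and (4,4), B in position (1,3), and zeros elsewhere, where U ranges over SO(2,ℝ) (2×2 rotation matrices) and B ranges over the symmetric 2×2 real matrices of trace 0, is a closed subgroup of Sp(2r,ℝ). -/
/-- The standard symplectic form `J` on `ℝ^{2r}`: `I₂` in position (1,3), `I_{r−2}` in
position (2,4), `−I₂` in position (3,1), `−I_{r−2}` in position (4,2). -/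
def Jmat (r : ℕ) : Matrix (Fin (2 * r)) (Fin (2 * r)) ℝ := fun i j =>
  if (j : ℕ) = (i : ℕ) + r then 1 else if (i : ℕ) = (j : ℕ) + r then -1 else 0

/-- The symplectic group `Sp(2r,ℝ) = {g : gᵀJg = J}`. -/
def SpSet (r : ℕ) : Set (Matrix (Fin (2 * r)) (Fin (2 * r)) ℝ) :=
  {g | g.transpose * Jmat r * g = Jmat r}

/-- The `2r × 2r` matrix with blocks (of sizes `(2, r−2, 2, r−2)`): `U` in positions
(1,1) and (3,3), `I_{r−2}` in positions (2,2) and (4,4), `B` in position (1,3), and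
zeros elsewhere. -/
def assemble (r : ℕ) (hr : 2 ≤ r) (U B : Matrix (Fin 2) (Fin 2) ℝ) :
    Matrix (Fin (2 * r)) (Fin (2 * r)) ℝ := fun i j =>
  if hi : (i : ℕ) < 2 then
    (if hj : (j : ℕ) < 2 then U ⟨(i : ℕ), hi⟩ ⟨(j : ℕ), hj⟩
     else if hj2 : r ≤ (j : ℕ) ∧ (j : ℕ) < r + 2 then
       B ⟨(i : ℕ), hi⟩ ⟨(j : ℕ) - r, by omega⟩
     else 0)
  else if hi2 : (i : ℕ) < r then (if (i : ℕ) = (j : ℕ) then 1 else 0)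
  else if hi3 : (i : ℕ) < r + 2 then
    (if hj : r ≤ (j : ℕ) ∧ (j : ℕ) < r + 2 then
      U ⟨(i : ℕ) - r, by omega⟩ ⟨(j : ℕ) - r, by omega⟩
     else 0)
  else (if (i : ℕ) = (j : ℕ) then 1 else 0)

/-- The set `𝒮` of matrices of the above block form, with `U ∈ SO(2,ℝ)` and `B`
symmetric of trace 0. -/
def Sset (r : ℕ) (hr : 2 ≤ r) : Set (Matrix (Fin (2 * r)) (Fin (2 * r)) ℝ) :=
  {A | ∃ U B : Matrix (Fin 2) (Fin 2) ℝ,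
    U.transpose * U = 1 ∧ U.det = 1 ∧ B.transpose = B ∧ B.trace = 0 ∧
    A = assemble r hr U B}

/-!
Identify `ℝ²` with `ℂ`: rotations are `ℂ`-linear, and the symmetric traceless `2 × 2` matrices are
exactly the conjugate-linear maps, i.e. those anticommuting with the quarter turn `ω`. Since
`(U, B) * (U', B') = (U * U', U * B' + B * U')` and `(U, B)⁻¹ = (U⁻¹, -U⁻¹ * B * U⁻¹)`, closure
under products and inverses amounts to counting signs when moving `ω` across. The same count makes
`Uᵀ * B` symmetric, which is the symplectic condition. Finally `(U, B) ↦ assemble r hr U B` has a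
continuous left inverse, so it maps closed sets to closed sets.
-/

open Matrix

section PlaneMatrices

/-- The rotation by a right angle, i.e. multiplication by `i` on `R² = R ⊕ R i`. -/
def quarterTurn (R : Type*) [Ring R] : Matrix (Fin 2) (Fin 2) R :=
  !![0, -1; 1, 0]

variable {R : Type*} [CommRing R] {U B : Matrix (Fin 2) (Fin 2) R}

lemma transpose_mul_quarterTurn_mul (U : Matrix (Fin 2) (Fin 2) R) :
    Uᵀ * quarterTurn R * U = U.det • quarterTurn R := by
  ext i j
  fin_cases i <;> fin_cases j <;>
    simp [quarterTurn, Matrix.mul_apply, Fin.sum_univ_two, det_fin_two] <;> ring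

lemma commute_quarterTurn_of_mem_specialOrthogonalGroup
    (hU : U ∈ specialOrthogonalGroup (Fin 2) R) : Commute U (quarterTurn R) := by
  obtain ⟨hU, hdet⟩ := mem_specialOrthogonalGroup_iff.1 hU
  calc U * quarterTurn R = U * (Uᵀ * quarterTurn R * U) := by
        rw [transpose_mul_quarterTurn_mul, hdet, one_smul]
    _ = U * Uᵀ * quarterTurn R * U := by simp only [Matrix.mul_assoc]
    _ = quarterTurn R * U := by rw [(mem_orthogonalGroup_iff _ _).1 hU, Matrix.one_mul]

lemma isSymm_and_trace_eq_zero_iff_semiconjBy_quarterTurn :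
    B.IsSymm ∧ B.trace = 0 ↔ SemiconjBy B (quarterTurn R) (-quarterTurn R) := by
  have symm_traceless : B.IsSymm ∧ B.trace = 0 ↔ B 0 1 = B 1 0 ∧ B 0 0 = -B 1 1 := by
    rw [IsSymm.ext_iff, trace_fin_two, ← eq_neg_iff_add_eq_zero]
    simp [Fin.forall_fin_two, eq_comm]
  have anticommute : SemiconjBy B (quarterTurn R) (-quarterTurn R) ↔
      (B 0 1 = B 1 0 ∧ -B 0 0 = B 1 1) ∧ B 1 1 = -B 0 0 ∧ -B 1 0 = -B 0 1 := by
    simp [SemiconjBy, ← Matrix.ext_iff, quarterTurn, Matrix.mul_apply, Fin.forall_fin_two,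
      vecMul_eq_sum]
  rw [symm_traceless, anticommute]
  grind

end PlaneMatrices

section OrthogonalGroup

variable {n R : Type*} [Fintype n] [DecidableEq n] [CommRing R] {U : Matrix n n R}

lemma inv_eq_transpose_of_mem_orthogonalGroup (hU : U ∈ orthogonalGroup n R) : U⁻¹ = Uᵀ :=
  inv_eq_left_inv ((mem_orthogonalGroup_iff' _ _).1 hU)

lemma inv_mem_specialOrthogonalGroup (hU : U ∈ specialOrthogonalGroup n R) :
    U⁻¹ ∈ specialOrthogonalGroup n R := by
  rw [inv_eq_transpose_of_mem_orthogonalGroup hU.1]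
  refine mem_specialOrthogonalGroup_iff.2 ⟨(mem_orthogonalGroup_iff _ _).2 ?_, ?_⟩
  · rw [transpose_transpose, (mem_orthogonalGroup_iff' _ _).1 hU.1]
  · exact (det_transpose U).trans hU.2

lemma isClosed_specialOrthogonalGroup [TopologicalSpace R] [IsTopologicalRing R] [T1Space R] :
    IsClosed (specialOrthogonalGroup n R : Set (Matrix n n R)) := by
  have h : (specialOrthogonalGroup n R : Set (Matrix n n R)) =
      (fun U ↦ (U * Uᵀ, U.det)) ⁻¹' {(1, 1)} := by
    ext U
    simp only [SetLike.mem_coe, mem_specialOrthogonalGroup_iff, mem_orthogonalGroup_iff,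
      Set.mem_preimage, Set.mem_singleton_iff, Prod.mk.injEq]
  rw [h]
  exact isClosed_singleton.preimage (by fun_prop)

end OrthogonalGroup

section SiegelBlock

variable {n R : Type*} (m : Type*) [DecidableEq m]

/-- The block upper triangular matrix with `U ⊕ 1` in both diagonal blocks and `B ⊕ 0` in the upper
right one, the shape of an element of the Siegel parabolic subgroup with orthogonal Levi part. The
index type `m` carrying the summands `1` and `0` is explicit since `U` and `B` do not determine
it. -/
def siegelBlock [Zero R] [One R] (U B : Matrix n n R) :
    Matrix ((n ⊕ m) ⊕ (n ⊕ m)) ((n ⊕ m) ⊕ (n ⊕ m)) R :=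
  fromBlocks (fromBlocks U 0 0 1) (fromBlocks B 0 0 0) 0 (fromBlocks U 0 0 1)

lemma isClosedEmbedding_siegelBlock [Zero R] [One R] [TopologicalSpace R] [T2Space R] :
    Topology.IsClosedEmbedding
      (fun p : Matrix n n R × Matrix n n R ↦ siegelBlock m p.1 p.2) := by
  let corners (A : Matrix ((n ⊕ m) ⊕ (n ⊕ m)) ((n ⊕ m) ⊕ (n ⊕ m)) R) :
      Matrix n n R × Matrix n n R :=
    (A.submatrix (Sum.inl ∘ Sum.inl) (Sum.inl ∘ Sum.inl),
      A.submatrix (Sum.inl ∘ Sum.inl) (Sum.inr ∘ Sum.inl))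
  have left_inv : Function.LeftInverse corners (fun p ↦ siegelBlock m p.1 p.2) := fun _ ↦ rfl
  refine left_inv.isClosedEmbedding (by fun_prop) ?_
  unfold siegelBlock
  fun_prop

lemma siegelBlock_mul [Fintype m] [Fintype n] [NonAssocSemiring R]
    (U B U' B' : Matrix n n R) :
    siegelBlock m U B * siegelBlock m U' B' = siegelBlock m (U * U') (U * B' + B * U') := by
  simp [siegelBlock, fromBlocks_multiply, fromBlocks_add]

variable [DecidableEq n]

lemma siegelBlock_one_zero [Zero R] [One R] : siegelBlock m (1 : Matrix n n R) 0 = 1 := by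
  simp only [siegelBlock, fromBlocks_one, fromBlocks_zero]

variable [Fintype m] [Fintype n] [CommRing R]

lemma inv_siegelBlock {U : Matrix n n R} (hU : IsUnit U) (B : Matrix n n R) :
    (siegelBlock m U B)⁻¹ = siegelBlock m U⁻¹ (-(U⁻¹ * B * U⁻¹)) := by
  have hdet : IsUnit U.det := (isUnit_iff_isUnit_det U).1 hU
  apply inv_eq_right_inv
  rw [siegelBlock_mul, Matrix.mul_neg, Matrix.mul_assoc U⁻¹, mul_nonsing_inv_cancel_left _ _ hdet,
    neg_add_cancel, mul_nonsing_inv _ hdet, siegelBlock_one_zero]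

lemma siegelBlock_mem_symplecticGroup_iff {U B : Matrix n n R} :
    siegelBlock m U B ∈ symplecticGroup (n ⊕ m) R ↔ Uᵀ * U = 1 ∧ (Uᵀ * B).IsSymm := by
  rw [siegelBlock, SymplecticGroup.fromBlocks_mem_iff]
  simp [fromBlocks_transpose, fromBlocks_multiply, ← fromBlocks_one, fromBlocks_inj, IsSymm,
    and_comm]

end SiegelBlock

lemma isClosedEmbedding_reindex {l m n o R : Type*} [TopologicalSpace R] [T2Space R]
    (e₁ : l ≃ m) (e₂ : n ≃ o) :
    Topology.IsClosedEmbedding (reindex e₁ e₂ : Matrix l n R → Matrix m o R) :=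
  Function.LeftInverse.isClosedEmbedding (reindex e₁ e₂).left_inv
    (continuous_id.matrix_reindex e₁.symm e₂.symm) (continuous_id.matrix_reindex e₁ e₂)

section Coordinates

variable {r : ℕ} (hr : 2 ≤ r)

/-- The partition of the `2r` coordinates into consecutive blocks of sizes `2, r - 2, 2, r - 2`. -/
def blockEquiv : (Fin 2 ⊕ Fin (r - 2)) ⊕ (Fin 2 ⊕ Fin (r - 2)) ≃ Fin (2 * r) :=
  ((finSumFinEquiv.sumCongr finSumFinEquiv).trans finSumFinEquiv).trans (finCongr (by omega))

lemma val_blockEquiv_inl_inl (i : Fin 2) : (blockEquiv hr (.inl (.inl i)) : ℕ) = i := by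
  simp [blockEquiv]

lemma val_blockEquiv_inl_inr (i : Fin (r - 2)) :
    (blockEquiv hr (.inl (.inr i)) : ℕ) = 2 + i := by
  simp [blockEquiv]

lemma val_blockEquiv_inr_inl (i : Fin 2) : (blockEquiv hr (.inr (.inl i)) : ℕ) = r + i := by
  simp [blockEquiv, Nat.add_sub_of_le hr, add_comm]

lemma val_blockEquiv_inr_inr (i : Fin (r - 2)) :
    (blockEquiv hr (.inr (.inr i)) : ℕ) = r + (2 + i) := by
  simp [blockEquiv, Nat.add_sub_of_le hr, add_comm]

lemma assemble_eq_reindex_siegelBlock (U B : Matrix (Fin 2) (Fin 2) ℝ) :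
    assemble r hr U B =
      reindex (blockEquiv hr) (blockEquiv hr) (siegelBlock (Fin (r - 2)) U B) := by
  rw [← Equiv.symm_apply_eq, reindex_symm]
  ext ((i | i) | (i | i)) ((j | j) | (j | j)) <;>
    simp only [reindex_apply, Equiv.symm_symm, submatrix_apply, assemble, siegelBlock,
      val_blockEquiv_inl_inl, val_blockEquiv_inl_inr, val_blockEquiv_inr_inl,
      val_blockEquiv_inr_inr, fromBlocks_apply₁₁, fromBlocks_apply₁₂, fromBlocks_apply₂₁,
      fromBlocks_apply₂₂, Matrix.zero_apply, Matrix.one_apply, Fin.ext_iff] <;>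
    grind

lemma Jmat_eq_neg_reindex_J :
    Jmat r = -reindex (blockEquiv hr) (blockEquiv hr) (J (Fin 2 ⊕ Fin (r - 2)) ℝ) := by
  rw [← neg_eq_iff_eq_neg, ← Equiv.symm_apply_eq, reindex_symm]
  ext ((i | i) | (i | i)) ((j | j) | (j | j)) <;>
    simp only [reindex_apply, Equiv.symm_symm, submatrix_apply, Jmat, J, Matrix.neg_apply,
      val_blockEquiv_inl_inl, val_blockEquiv_inl_inr, val_blockEquiv_inr_inl,
      val_blockEquiv_inr_inr, fromBlocks_apply₁₁, fromBlocks_apply₁₂, fromBlocks_apply₂₁,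
      fromBlocks_apply₂₂, Matrix.zero_apply, Matrix.one_apply, Sum.inl.injEq, Sum.inr.injEq,
      reduceCtorEq, Fin.ext_iff] <;>
    grind

lemma reindex_blockEquiv_mem_SpSet_iff
    {A : Matrix ((Fin 2 ⊕ Fin (r - 2)) ⊕ (Fin 2 ⊕ Fin (r - 2)))
      ((Fin 2 ⊕ Fin (r - 2)) ⊕ (Fin 2 ⊕ Fin (r - 2))) ℝ} :
    reindex (blockEquiv hr) (blockEquiv hr) A ∈ SpSet r ↔
      A ∈ symplecticGroup (Fin 2 ⊕ Fin (r - 2)) ℝ := by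
  rw [SymplecticGroup.mem_iff', SpSet, Set.mem_ofPred_eq, Jmat_eq_neg_reindex_J hr,
    transpose_reindex, Matrix.mul_neg, Matrix.neg_mul, neg_inj, ← coe_reindexAlgEquiv ℝ ℝ,
    ← map_mul, ← map_mul, EmbeddingLike.apply_eq_iff_eq]

lemma assemble_one_zero : assemble r hr 1 0 = 1 := by
  rw [assemble_eq_reindex_siegelBlock, siegelBlock_one_zero, ← coe_reindexAlgEquiv ℝ ℝ, map_one]

lemma assemble_mul (U B U' B' : Matrix (Fin 2) (Fin 2) ℝ) :
    assemble r hr U B * assemble r hr U' B' = assemble r hr (U * U') (U * B' + B * U') := by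
  simp only [assemble_eq_reindex_siegelBlock, ← coe_reindexAlgEquiv ℝ ℝ, ← map_mul,
    siegelBlock_mul]

lemma inv_assemble {U : Matrix (Fin 2) (Fin 2) ℝ} (hU : IsUnit U) (B : Matrix (Fin 2) (Fin 2) ℝ) :
    (assemble r hr U B)⁻¹ = assemble r hr U⁻¹ (-(U⁻¹ * B * U⁻¹)) := by
  simp only [assemble_eq_reindex_siegelBlock, inv_reindex, inv_siegelBlock _ hU]

lemma assemble_mem_SpSet_iff {U B : Matrix (Fin 2) (Fin 2) ℝ} :
    assemble r hr U B ∈ SpSet r ↔ Uᵀ * U = 1 ∧ (Uᵀ * B).IsSymm := by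
  rw [assemble_eq_reindex_siegelBlock, reindex_blockEquiv_mem_SpSet_iff,
    siegelBlock_mem_symplecticGroup_iff]

lemma isClosedEmbedding_assemble :
    Topology.IsClosedEmbedding
      (fun p : Matrix (Fin 2) (Fin 2) ℝ × Matrix (Fin 2) (Fin 2) ℝ ↦ assemble r hr p.1 p.2) := by
  simp only [assemble_eq_reindex_siegelBlock]
  exact (isClosedEmbedding_reindex _ _).comp (isClosedEmbedding_siegelBlock _)

end Coordinates

section SsetLemmas

variable {r : ℕ} {hr : 2 ≤ r}

lemma mem_Sset_iff {A : Matrix (Fin (2 * r)) (Fin (2 * r)) ℝ} :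
    A ∈ Sset r hr ↔ ∃ U ∈ specialOrthogonalGroup (Fin 2) ℝ,
      ∃ B, SemiconjBy B (quarterTurn ℝ) (-quarterTurn ℝ) ∧ A = assemble r hr U B := by
  simp only [Sset, Set.mem_ofPred_eq, mem_specialOrthogonalGroup_iff, mem_orthogonalGroup_iff',
    ← isSymm_and_trace_eq_zero_iff_semiconjBy_quarterTurn, IsSymm, and_assoc, exists_and_left]

lemma Sset_subset_SpSet : Sset r hr ⊆ SpSet r := by
  intro A hA
  obtain ⟨U, hU, B, hB, rfl⟩ := mem_Sset_iff.1 hA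
  have hUinv := commute_quarterTurn_of_mem_specialOrthogonalGroup
    (inv_mem_specialOrthogonalGroup hU)
  refine (assemble_mem_SpSet_iff hr).2 ⟨(mem_orthogonalGroup_iff' _ _).1 hU.1, ?_⟩
  rw [← inv_eq_transpose_of_mem_orthogonalGroup hU.1]
  exact (isSymm_and_trace_eq_zero_iff_semiconjBy_quarterTurn.2
    (hUinv.neg_right.semiconjBy.mul_left hB)).1

lemma one_mem_Sset : 1 ∈ Sset r hr :=
  mem_Sset_iff.2 ⟨1, one_mem _, 0, SemiconjBy.zero_left _ _, (assemble_one_zero hr).symm⟩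

lemma mul_mem_Sset {A A' : Matrix (Fin (2 * r)) (Fin (2 * r)) ℝ} (hA : A ∈ Sset r hr)
    (hA' : A' ∈ Sset r hr) : A * A' ∈ Sset r hr := by
  obtain ⟨U, hU, B, hB, rfl⟩ := mem_Sset_iff.1 hA
  obtain ⟨U', hU', B', hB', rfl⟩ := mem_Sset_iff.1 hA'
  have hUω := commute_quarterTurn_of_mem_specialOrthogonalGroup hU
  have hUω' := commute_quarterTurn_of_mem_specialOrthogonalGroup hU'
  exact mem_Sset_iff.2 ⟨U * U', mul_mem hU hU', U * B' + B * U',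
    (hUω.neg_right.semiconjBy.mul_left hB').add_left (hB.mul_left hUω'),
    assemble_mul hr U B U' B'⟩

lemma inv_mem_Sset {A : Matrix (Fin (2 * r)) (Fin (2 * r)) ℝ} (hA : A ∈ Sset r hr) :
    A⁻¹ ∈ Sset r hr := by
  obtain ⟨U, hU, B, hB, rfl⟩ := mem_Sset_iff.1 hA
  have hUinv := inv_mem_specialOrthogonalGroup hU
  have hUω := commute_quarterTurn_of_mem_specialOrthogonalGroup hUinv
  have hUunit : IsUnit U := IsUnit.of_mul_eq_one _ ((mem_orthogonalGroup_iff _ _).1 hU.1)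
  exact mem_Sset_iff.2 ⟨U⁻¹, hUinv, -(U⁻¹ * B * U⁻¹),
    ((hUω.neg_right.semiconjBy.mul_left hB).mul_left hUω).neg_left, inv_assemble hr hUunit B⟩

lemma isClosed_Sset : IsClosed (Sset r hr) := by
  have hS : Sset r hr = (fun p ↦ assemble r hr p.1 p.2) '' ((specialOrthogonalGroup (Fin 2) ℝ) ×ˢ
      {B | SemiconjBy B (quarterTurn ℝ) (-quarterTurn ℝ)}) := by
    ext A
    simp [mem_Sset_iff, eq_comm]
  rw [hS]
  refine (isClosedEmbedding_assemble hr).isClosedMap _ (isClosed_specialOrthogonalGroup.prod ?_)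
  exact isClosed_eq (by fun_prop) (by fun_prop)

end SsetLemmas

/-- The set `𝒮` is a closed subgroup of `Sp(2r,ℝ)`: it is contained in
`Sp(2r,ℝ)`, contains the identity, is closed under multiplication and inverses, and is a
closed subset. -/
theorem stmt_16 (r : ℕ) (hr : 2 ≤ r) :
    Sset r hr ⊆ SpSet r ∧
    (1 : Matrix (Fin (2 * r)) (Fin (2 * r)) ℝ) ∈ Sset r hr ∧
    (∀ A ∈ Sset r hr, ∀ B ∈ Sset r hr, A * B ∈ Sset r hr) ∧
    (∀ A ∈ Sset r hr, A⁻¹ ∈ Sset r hr) ∧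
    IsClosed (Sset r hr) := by
  exact ⟨Sset_subset_SpSet, one_mem_Sset, fun _ hA _ hB ↦ mul_mem_Sset hA hB,
    fun _ hA ↦ inv_mem_Sset hA, isClosed_Sset⟩
end

section
/- Let t, t' ∈ [0,∞), g ∈ SL(2,ℝ), and k ∈ SO(2,ℂ). If g·u(it) = u(it')·k, then t = t'. (Equivalently: the curve t ↦ u(it)·SO(2,ℂ) in SL(2,ℂ)/SO(2,ℂ), t ≥ 0, meets each SL(2,ℝ)-orbit in at most one point.) -/
/-- `u(z) = [[1, z],[0,1]] = exp(zE) ∈ SL(2,ℂ)`. -/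
def uMat (z : ℂ) : Matrix (Fin 2) (Fin 2) ℂ := !![1, z; 0, 1]

/-!
Right multiplication by an orthogonal `k` leaves `x xᵀ` unchanged, while left multiplication by a
real `g` acts on the real part of `x xᵀ` by the congruence `S ↦ g S gᵀ`, which multiplies
`det Re (x xᵀ)` by `(det g)²`. If `g u(z) = u(w) k`, then `det g = det k = ±1`, so this determinant
is the same for `u(z)` and `u(w)`; on `u(z)` it equals `1 - (Im z)²`.
-/

section ReGram

open Complex Matrix

variable {l m n p : Type*}

theorem map_ofReal_map_re {g : Matrix l n ℂ} (hg : ∀ i j, (g i j).im = 0) :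
    (g.map re).map ofReal = g := by
  ext i j
  exact Complex.ext rfl (hg i j).symm

theorem map_re_ofReal_mul [Fintype m] (g : Matrix l m ℝ) (x : Matrix m p ℂ) :
    (g.map ofReal * x).map re = g * x.map re := by
  ext i j
  simp [mul_apply]

theorem map_re_mul_ofReal [Fintype m] (x : Matrix l m ℂ) (g : Matrix m p ℝ) :
    (x * g.map ofReal).map re = x.map re * g := by
  ext i j
  simp [mul_apply]

/-- The entrywise real part of the complex bilinear Gram matrix `x xᵀ` of the rows of `x`; its
determinant is the orbit invariant. The transpose is not conjugated, because it is
the complex orthogonal group that acts on the right. -/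
def reGram [Fintype n] (x : Matrix m n ℂ) : Matrix m m ℝ := (x * xᵀ).map re

theorem reGram_mul_of_mul_transpose_eq_one [Fintype n] [Fintype p] [DecidableEq n]
    (x : Matrix m n ℂ) {k : Matrix n p ℂ} (hk : k * kᵀ = 1) : reGram (x * k) = reGram x := by
  have gram_eq : x * k * (x * k)ᵀ = x * xᵀ := by
    rw [transpose_mul, Matrix.mul_assoc, ← Matrix.mul_assoc k, hk, Matrix.one_mul]
  rw [reGram, gram_eq, reGram]

theorem reGram_ofReal_mul [Fintype m] [Fintype n] (g : Matrix l m ℝ) (x : Matrix m n ℂ) :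
    reGram (g.map ofReal * x) = g * reGram x * gᵀ := by
  calc reGram (g.map ofReal * x)
      = (g.map ofReal * (x * xᵀ) * gᵀ.map ofReal).map re := by
        rw [reGram, transpose_mul, transpose_map]
        simp only [Matrix.mul_assoc]
    _ = g * reGram x * gᵀ := by rw [map_re_mul_ofReal, map_re_ofReal_mul, reGram]

theorem det_reGram_ofReal_mul [Fintype m] [Fintype n] [DecidableEq m]
    (g : Matrix m m ℝ) (x : Matrix m n ℂ) :
    (reGram (g.map ofReal * x)).det = g.det ^ 2 * (reGram x).det := by
  rw [reGram_ofReal_mul, det_mul, det_mul, det_transpose]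
  ring

theorem sq_det_eq_one_of_transpose_mul_self {R : Type*} [CommRing R] [Fintype n] [DecidableEq n]
    {k : Matrix n n R} (hk : kᵀ * k = 1) : k.det ^ 2 = 1 := by
  simpa [sq] using congrArg det hk

theorem det_uMat (z : ℂ) : (uMat z).det = 1 := by
  simp [uMat]

theorem reGram_uMat (z : ℂ) :
    reGram (uMat z) = !![1 + (z.re ^ 2 - z.im ^ 2), z.re; z.re, 1] := by
  ext i j
  fin_cases i <;> fin_cases j <;> simp [reGram, uMat, vecMul_eq_sum, sq]

theorem det_reGram_uMat (z : ℂ) : (reGram (uMat z)).det = 1 - z.im ^ 2 := by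
  rw [reGram_uMat, det_fin_two_of]
  ring

theorem sq_det_eq_one_of_ofReal_mul_uMat {g : Matrix (Fin 2) (Fin 2) ℝ}
    {k : Matrix (Fin 2) (Fin 2) ℂ} {z w : ℂ} (hk : kᵀ * k = 1)
    (h : g.map ofReal * uMat z = uMat w * k) : g.det ^ 2 = 1 := by
  have det_g : (g.det : ℂ) = k.det := by
    have det_h := congrArg det h
    rw [det_mul, det_mul, det_uMat, det_uMat, mul_one, one_mul] at det_h
    exact (ofRealHom.map_det g).trans det_h
  have sq_det_g := sq_det_eq_one_of_transpose_mul_self hk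
  rw [← det_g] at sq_det_g
  exact_mod_cast sq_det_g

end ReGram

theorem stmt_17_general {g : Matrix (Fin 2) (Fin 2) ℝ} {k : Matrix (Fin 2) (Fin 2) ℂ}
    {z w : ℂ} (hk : k.transpose * k = 1)
    (h : g.map Complex.ofReal * uMat z = uMat w * k) : |z.im| = |w.im| := by
  have det_eq : 1 - z.im ^ 2 = 1 - w.im ^ 2 :=
    calc 1 - z.im ^ 2 = g.det ^ 2 * (reGram (uMat z)).det := by
          rw [sq_det_eq_one_of_ofReal_mul_uMat hk h, one_mul, det_reGram_uMat]
      _ = (reGram (uMat w * k)).det := by rw [← det_reGram_ofReal_mul, h]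
      _ = 1 - w.im ^ 2 := by
          rw [reGram_mul_of_mul_transpose_eq_one _ (mul_eq_one_comm.mp hk), det_reGram_uMat]
  exact (sq_eq_sq_iff_abs_eq_abs _ _).mp (sub_right_injective det_eq)

/-- Let `t, t' ∈ [0,∞)`, `g ∈ SL(2,ℝ)` and `k ∈ SO(2,ℂ)`.
If `g·u(it) = u(it')·k` then `t = t'`; i.e. the curve `t ↦ u(it)·SO(2,ℂ)` in
`SL(2,ℂ)/SO(2,ℂ)`, `t ≥ 0`, meets each `SL(2,ℝ)`-orbit in at most one point. -/
theorem stmt_17 (g k : Matrix (Fin 2) (Fin 2) ℂ)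
    (hg_det : g.det = 1) (hg_real : ∀ i j, (g i j).im = 0)
    (hk_det : k.det = 1) (hk_orth : k.transpose * k = 1)
    (t t' : ℝ) (ht : 0 ≤ t) (ht' : 0 ≤ t')
    (h : g * uMat (Complex.I * t) = uMat (Complex.I * t') * k) :
    t = t' := by
  rw [← map_ofReal_map_re hg_real] at h
  simpa [abs_of_nonneg ht, abs_of_nonneg ht'] using stmt_17_general hk_orth h
end

section
/- (a) If z, w ∈ ℂ and u(z) = u(w)·k for some k ∈ SO(2,ℂ), then z = w; hence the map z ↦ u(z)·SO(2,ℂ) from ℂ to SL(2,ℂ)/SO(2,ℂ) is injective. (b) The set {u(z)·k : z ∈ ℂ, k ∈ SO(2,ℂ)} is closed in SL(2,ℂ); hence the image of this map is a closed subset of SL(2,ℂ)/SO(2,ℂ). -/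
/-!
The map `g ↦ g * gᵀ` is constant on left cosets of the orthogonal group and separates those of
invertible matrices. The entry of `u(z) * u(z)ᵀ` at the position of `z` is `z` itself, so `z` is
recovered continuously from the coset of `u(z)`. Hence `u(z)·SO` determines `z`, and the union of
these cosets is cut out by the closed conditions `det g = 1` and `g * gᵀ = u(z) * u(z)ᵀ`, where
`z` is read off from `g * gᵀ`.
-/

open Matrix

section OrthogonalCosets

variable {n R : Type*} [Fintype n] [DecidableEq n] [CommRing R] {A g k : Matrix n n R}

theorem mul_mul_transpose_of_mem_orthogonalGroup (A : Matrix n n R)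
    (hk : k ∈ orthogonalGroup n R) : A * k * (A * k)ᵀ = A * Aᵀ := by
  rw [transpose_mul, Matrix.mul_assoc, ← Matrix.mul_assoc k,
    (mem_orthogonalGroup_iff n R).mp hk, Matrix.one_mul]

theorem inv_mul_mem_orthogonalGroup (hA : IsUnit A.det) (h : g * gᵀ = A * Aᵀ) :
    A⁻¹ * g ∈ orthogonalGroup n R := by
  rw [mem_orthogonalGroup_iff]
  calc A⁻¹ * g * (A⁻¹ * g)ᵀ = A⁻¹ * (g * gᵀ) * A⁻¹ᵀ := by
        simp only [transpose_mul, Matrix.mul_assoc]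
    _ = A⁻¹ * A * (A⁻¹ * A)ᵀ := by
        simp only [h, transpose_mul, Matrix.mul_assoc]
    _ = 1 := by rw [nonsing_inv_mul A hA, transpose_one, Matrix.one_mul]

theorem exists_mem_specialOrthogonalGroup_eq_mul_iff (hA : IsUnit A.det) :
    (∃ k ∈ specialOrthogonalGroup n R, g = A * k) ↔ g.det = A.det ∧ g * gᵀ = A * Aᵀ := by
  constructor
  · rintro ⟨k, hk, rfl⟩
    obtain ⟨hk_orth, hk_det⟩ := mem_specialOrthogonalGroup_iff.mp hk
    exact ⟨by rw [det_mul, hk_det, mul_one], mul_mul_transpose_of_mem_orthogonalGroup A hk_orth⟩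
  · rintro ⟨h_det, h_gram⟩
    have h_inv_det : (A⁻¹ * g).det = 1 := by
      rw [det_mul, h_det, ← det_mul, nonsing_inv_mul A hA, det_one]
    exact ⟨A⁻¹ * g,
      mem_specialOrthogonalGroup_iff.mpr ⟨inv_mul_mem_orthogonalGroup hA h_gram, h_inv_det⟩,
      (mul_nonsing_inv_cancel_left A g hA).symm⟩

end OrthogonalCosets

section Transvection

variable {n R : Type*} [DecidableEq n] [CommRing R] {i j : n}

theorem continuous_transvection [TopologicalSpace R] [ContinuousAdd R] (i j : n) :
    Continuous (transvection i j : R → Matrix n n R) := by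
  refine continuous_const.add (continuous_matrix fun a b ↦ ?_)
  simp only [single_apply]
  split_ifs <;> fun_prop

variable [Fintype n]

theorem transvection_mul_transpose_apply (hij : i ≠ j) (c : R) :
    (transvection i j c * (transvection i j c)ᵀ) i j = c := by
  rw [transvection_mul_apply_same]
  simp [transvection, hij, hij.symm]

theorem eq_of_transvection_eq_transvection_mul (hij : i ≠ j) {z w : R} {k : Matrix n n R}
    (hk : k ∈ orthogonalGroup n R) (h : transvection i j z = transvection i j w * k) :
    z = w := by
  rw [← transvection_mul_transpose_apply hij z, h, mul_mul_transpose_of_mem_orthogonalGroup _ hk,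
    transvection_mul_transpose_apply hij]

theorem exists_eq_transvection_mul_iff (hij : i ≠ j) {g : Matrix n n R} :
    (∃ z, ∃ k ∈ specialOrthogonalGroup n R, g = transvection i j z * k) ↔
      g.det = 1 ∧ g * gᵀ =
        transvection i j ((g * gᵀ) i j) * (transvection i j ((g * gᵀ) i j))ᵀ := by
  have coset_iff (z : R) : (∃ k ∈ specialOrthogonalGroup n R, g = transvection i j z * k) ↔
      g.det = 1 ∧ g * gᵀ = transvection i j z * (transvection i j z)ᵀ := by
    rw [exists_mem_specialOrthogonalGroup_eq_mul_iff (by simp [hij]),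
      det_transvection_of_ne i j hij]
  simp only [coset_iff]
  refine ⟨?_, fun h ↦ ⟨_, h⟩⟩
  rintro ⟨z, h_det, h_gram⟩
  have h_entry : (g * gᵀ) i j = z := by rw [h_gram, transvection_mul_transpose_apply hij]
  exact ⟨h_det, by rw [h_entry, h_gram]⟩

theorem isClosed_setOf_eq_transvection_mul [TopologicalSpace R] [IsTopologicalRing R] [T2Space R]
    (hij : i ≠ j) :
    IsClosed {g : Matrix n n R |
      ∃ z, ∃ k ∈ specialOrthogonalGroup n R, g = transvection i j z * k} := by
  simp only [exists_eq_transvection_mul_iff hij]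
  have h_gram : Continuous fun g : Matrix n n R ↦ g * gᵀ :=
    continuous_id.matrix_mul continuous_id.matrix_transpose
  have h_transvection : Continuous fun g : Matrix n n R ↦ transvection i j ((g * gᵀ) i j) :=
    (continuous_transvection i j).comp (h_gram.matrix_elem i j)
  exact (isClosed_eq continuous_id.matrix_det continuous_const).inter
    (isClosed_eq h_gram (h_transvection.matrix_mul h_transvection.matrix_transpose))

theorem stmt_18_general [TopologicalSpace R] [IsTopologicalRing R] [T2Space R] (hij : i ≠ j) :
    (∀ z w : R, ∀ k ∈ orthogonalGroup n R,
      transvection i j z = transvection i j w * k → z = w) ∧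
    IsClosed {g : Matrix n n R |
      ∃ z, ∃ k ∈ specialOrthogonalGroup n R, g = transvection i j z * k} :=
  ⟨fun _ _ _ ↦ eq_of_transvection_eq_transvection_mul hij, isClosed_setOf_eq_transvection_mul hij⟩

end Transvection

theorem uMat_eq_transvection (z : ℂ) : uMat z = transvection 0 1 z := by
  ext i j
  fin_cases i <;> fin_cases j <;> simp [uMat, transvection]

/-- (a) If `u(z) = u(w)·k` for some `k ∈ SO(2,ℂ)` then `z = w`; hence the
map `z ↦ u(z)·SO(2,ℂ)` from `ℂ` to `SL(2,ℂ)/SO(2,ℂ)` is injective.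
(b) The set `{u(z)·k : z ∈ ℂ, k ∈ SO(2,ℂ)}` is closed in `SL(2,ℂ)`; hence the image of
this map is a closed subset of `SL(2,ℂ)/SO(2,ℂ)`. -/
theorem stmt_18 :
    (∀ z w : ℂ, ∀ k : Matrix (Fin 2) (Fin 2) ℂ,
      k.det = 1 → k.transpose * k = 1 → uMat z = uMat w * k → z = w) ∧
    IsClosed {g : Matrix (Fin 2) (Fin 2) ℂ | ∃ z : ℂ, ∃ k : Matrix (Fin 2) (Fin 2) ℂ,
      k.det = 1 ∧ k.transpose * k = 1 ∧ g = uMat z * k} := by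
  obtain ⟨h_inj, h_closed⟩ := stmt_18_general (R := ℂ) (zero_ne_one (α := Fin 2))
  simp only [mem_specialOrthogonalGroup_iff, mem_orthogonalGroup_iff'] at h_inj h_closed
  simp only [uMat_eq_transvection]
  exact ⟨fun z w k _ ↦ h_inj z w k,
    by simpa only [and_assoc, and_comm, and_left_comm] using h_closed⟩
end
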